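/- arXiv:2004.01484 — 3 statements merged into one kernel-verified Lean document; each statement's English description precedes it below -/
import Mathlib

section
/- Let A be a type, let R be a nontrivial element of the free group on A that is cyclically reduced and not a proper power, and let n ≥ 2 be a natural number. Let G be the one-relator group presented by ⟨A | Rⁿ = 1⟩, i.e. the quotient of FreeGroup A by the normal closure of {Rⁿ}. If w is a nontrivial element of FreeGroup A whose image in G is the identity (i.e. w lies in the normal closure of {Rⁿ}), then the reduced word of w contains a subword u (a contiguous infix of the list w.toWord) such that either u or the inverse word of u is a subword of the reduced word of Rⁿ, and such that n · (length of u) > (n−1) · (length of the reduced word of Rⁿ). -/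
/-- A word over `A` is cyclically reduced if its first and last letters are not
mutually inverse; an element of the free group is cyclically reduced if its
reduced word is. -/
def FreeGroup.CyclicallyReduced {A : Type*} [DecidableEq A] (w : FreeGroup A) : Prop :=
  ∀ x : A × Bool, w.toWord.head? = some x → w.toWord.getLast? ≠ some (x.1, !x.2)

/-- The formal inverse of a word: reverse the list and negate each sign. -/
def FreeGroup.wordInv {A : Type*} (u : List (A × Bool)) : List (A × Bool) :=
  (u.map fun p => (p.1, !p.2)).reverse

/-!
Suppose that `R` is a cyclically reduced word of length `ℓ` without rotational symmetry, that
`N = nℓ`, and that `w` is a product of conjugates of `Rⁿ` and of its inverse by elements of a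
finite set `S`. Let `H` be the subgroup generated by the conjugates of `Rⁿ` by `S`. Glue one
`N`-gon with boundary word `Rⁿ` per orbit to the Schreier graph of `H`, so that the boundaries of
these cells generate the loops of the graph.

As in the work of Louder and Wilton, `R` has a *stacking*: the corners of the polygon labelled by
`R` can be lifted to distinct heights so that sides with the same label do not cross. Looking at the
stack of cells from above, call a side of a cell a *start* if it is on top of its edge while its
first corner is not on top of its vertex. An Euler characteristic count shows that there are fewer
starts than cells, and the same holds seen from below. Hence the boundary of some cell has at most
one start altogether. It stays on top and at the bottom at once along `N - ℓ + 1` consecutive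
corners, whose vertices therefore meet no other corner, so that the sides in between are free: no
other side lies on the same edge.

If the path reading `w` avoided a free side, the holonomy of a labelling changed on that side would
express `w` by fewer cells. If it visited a vertex other than its base point twice, the loop in
between would be a shorter counterexample. So in a minimal counterexample this simple path contains
all the free sides of the run and has to follow it from its first side to its last, which means that
`w` or `w⁻¹` contains a subword of `Rⁿ` of length `N - ℓ + 1`. Replacing a proper power `R` by its
root only makes this length larger.
-/

/-! ### Stackings of cyclic words -/

/-- The inverse of a letter of a word in a free group. -/
def letterInv {A : Type*} (p : A × Bool) : A × Bool := (p.1, !p.2)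

@[simp] theorem letterInv_letterInv {A : Type*} (p : A × Bool) : letterInv (letterInv p) = p := by
  simp [letterInv]

theorem exists_add_one_eq_add {ℓ : ℕ} [NeZero ℓ] {M : Type*} [AddCommGroup M] (g : ZMod ℓ → M)
    (hg : ∑ i, g i = 0) : ∃ φ : ZMod ℓ → M, ∀ i, φ (i + 1) = φ i + g i := by
  have hsum : ∑ t ∈ Finset.range ℓ, g t = 0 := by
    rw [← hg]
    refine Finset.sum_bij' (fun t _ => (t : ZMod ℓ)) (fun i _ => i.val) ?_ ?_ ?_ ?_ ?_
    · simp
    · exact fun i _ => by simpa using i.val_lt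
    · exact fun t ht => ZMod.val_cast_of_lt (by simpa using ht)
    · simp
    · simp
  refine ⟨fun i => ∑ t ∈ Finset.range i.val, g t, fun i => ?_⟩
  have hsucc : ∑ t ∈ Finset.range i.val, g t + g i = ∑ t ∈ Finset.range (i.val + 1), g t := by
    rw [Finset.sum_range_succ, ZMod.natCast_zmod_val]
  have hi : i + 1 = ((i.val + 1 : ℕ) : ZMod ℓ) := by simp
  simp only [hsucc, hi, ZMod.val_natCast]
  rcases (Nat.succ_le_of_lt i.val_lt).lt_or_eq with hlt | heq
  · rw [Nat.mod_eq_of_lt hlt]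
  · simp [← Nat.succ_eq_add_one, heq, hsum]

theorem eq_or_eq_of_card_le_two_mul {D V : Type*} [Finite D] [Finite V] (f : D → V)
    (hcard : Nat.card D ≤ 2 * Nat.card V) (hf : ∀ v, ∃ a b, a ≠ b ∧ f a = v ∧ f b = v)
    {a b d : D} (hab : a ≠ b) (ha : f a = f d) (hb : f b = f d) : d = a ∨ d = b := by
  choose s t hst hs ht using hf
  let p : V × Bool → D := fun x => if x.2 then s x.1 else t x.1
  have hp : ∀ x, f (p x) = x.1 := by
    rintro ⟨v, _ | _⟩ <;> simp [p, hs, ht]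
  have hinj : Function.Injective p := by
    rintro ⟨v, i⟩ ⟨w, j⟩ h
    obtain rfl : v = w := by simpa only [hp] using congrArg f h
    have := hst v
    cases i <;> cases j <;> grind
  have hsurj := (hinj.bijective_of_nat_card_le (by simpa [mul_comm] using hcard)).surjective
  have hfib : ∀ c, c = s (f c) ∨ c = t (f c) := by
    intro c
    obtain ⟨⟨v, _ | _⟩, rfl⟩ := hsurj c <;> simp [hp] <;> simp [p]
  grind

open Topology in
theorem exists_pos_add_mul_lt_add_mul {α K : Type*} [Finite α] [Field K] [LinearOrder K]
    [IsStrictOrderedRing K] [TopologicalSpace K] [OrderTopology K] (φ h : α → K) :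
    ∃ ε > 0, ∀ x y, φ x < φ y → φ x + ε * h x < φ y + ε * h y := by
  have hev : ∀ᶠ ε in 𝓝 (0 : K), ∀ x y, φ x < φ y → φ x + ε * h x < φ y + ε * h y := by
    simp only [Filter.eventually_all]
    intro x y hxy
    have hcont (z : α) : ContinuousAt (fun ε => φ z + ε * h z) 0 := by fun_prop
    exact (hcont x).eventually_lt (hcont y) (by simpa using hxy)
  obtain ⟨ε, hε, hpos⟩ := ((hev.filter_mono nhdsWithin_le_nhds).and self_mem_nhdsWithin).exists
    (f := 𝓝[>] (0 : K))
  exact ⟨ε, hpos, hε⟩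

/-- A cyclic word of length `ℓ` over `A`, with letters indexed by the integers modulo `ℓ`. Read
around a polygon, letter `i` labels the side from corner `i` to corner `i + 1`. -/
abbrev CyclicWord (A : Type*) (ℓ : ℕ) := ZMod ℓ → A × Bool

namespace CyclicWord

section Stacking

variable {A : Type*} {ℓ : ℕ} (W : CyclicWord A ℓ)

/-- No letter of the cyclic word is followed by its inverse. -/
def IsReduced : Prop := ∀ i, W (i + 1) ≠ letterInv (W i)

/-- The cyclic word has no nontrivial rotational symmetry. -/
def IsPrimitive : Prop := ∀ d, (∀ i, W (i + d) = W i) → d = 0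

/-- The corner at which side `i` starts when traversed in the direction of its generator. -/
def tail (i : ZMod ℓ) : ZMod ℓ := if (W i).2 then i else i + 1

/-- The corner at which side `i` ends when traversed in the direction of its generator. -/
def head (i : ZMod ℓ) : ZMod ℓ := if (W i).2 then i + 1 else i

/-- A stacking of the cyclic word: the corners are lifted to distinct heights so that sides with
the same generator do not cross each other. -/
structure IsStacking (h : ZMod ℓ → ℚ) : Prop where
  injective : Function.Injective h
  head_lt_head : ∀ i j, (W i).1 = (W j).1 → h (W.tail i) < h (W.tail j) →
    h (W.head i) < h (W.head j)

variable {W} in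
theorem IsStacking.neg {h : ZMod ℓ → ℚ} (H : W.IsStacking h) : W.IsStacking (-h) where
  injective := neg_injective.comp H.injective
  head_lt_head i j hij hlt := by simpa using H.head_lt_head j i hij.symm (by simpa using hlt)

/-- An identification of corners compatible with a folding of the cycle: two sides with the same
generator have identified tails iff they have identified heads. -/
def IsFolding (r : Setoid (ZMod ℓ)) : Prop :=
  ∀ i j, (W i).1 = (W j).1 → (r (W.tail i) (W.tail j) ↔ r (W.head i) (W.head j))

/-- The identification of sides induced by an identification `r` of corners. -/
def sideSetoid (r : Setoid (ZMod ℓ)) : Setoid (ZMod ℓ) :=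
  Setoid.ker (fun i => (W i).1) ⊓ r.comap W.tail

/-- The tail of a side in the graph obtained by folding along `r`. -/
def quotientTail (r : Setoid (ZMod ℓ)) : Quotient (W.sideSetoid r) → Quotient r :=
  Quotient.map W.tail fun _ _ h => h.2

variable {W}

/-- The head of a side in the graph obtained by folding along `r`. -/
def IsFolding.quotientHead {r : Setoid (ZMod ℓ)} (hr : W.IsFolding r) :
    Quotient (W.sideSetoid r) → Quotient r :=
  Quotient.map W.head fun i j h => (hr i j h.1).1 h.2

variable {r : Setoid (ZMod ℓ)}

theorem IsFolding.inf_ker (hr : W.IsFolding r) {φ : ZMod ℓ → ℚ}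
    (hφ : ∀ i j, W.sideSetoid r i j →
      φ (W.head i) - φ (W.tail i) = φ (W.head j) - φ (W.tail j)) :
    W.IsFolding (r ⊓ Setoid.ker φ) := by
  intro i j hij
  have hiff := hr i j hij
  constructor
  · rintro ⟨htail, hφt : φ _ = φ _⟩
    exact ⟨hiff.1 htail, show φ _ = φ _ by linarith [hφ i j ⟨hij, htail⟩]⟩
  · rintro ⟨hhead, hφh : φ _ = φ _⟩
    exact ⟨hiff.2 hhead, show φ _ = φ _ by linarith [hφ i j ⟨hij, hiff.2 hhead⟩]⟩

theorem IsFolding.exists_height [NeZero ℓ] (hr : W.IsFolding r)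
    (hcard : Nat.card (Quotient r) < Nat.card (Quotient (W.sideSetoid r))) :
    ∃ φ : ZMod ℓ → ℚ, (∀ i j, W.sideSetoid r i j →
        φ (W.head i) - φ (W.tail i) = φ (W.head j) - φ (W.tail j)) ∧
      ∃ x y, r x y ∧ φ x ≠ φ y := by
  classical
  let V := Quotient r
  let E := Quotient (W.sideSetoid r)
  let δ : (V → ℚ) →ₗ[ℚ] (E → ℚ) :=
    LinearMap.funLeft ℚ ℚ hr.quotientHead - LinearMap.funLeft ℚ ℚ (W.quotientTail r)
  let sign (i : ZMod ℓ) : ℚ := if (W i).2 then 1 else -1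
  let total : (E → ℚ) →ₗ[ℚ] ℚ := ∑ i, sign i • LinearMap.proj (⟦i⟧ : E)
  have hδ : Module.finrank ℚ δ.range + 1 ≤ Nat.card V := by
    have hker : 0 < Module.finrank ℚ δ.ker :=
      Module.finrank_pos_iff_exists_ne_zero.2 ⟨⟨1, by ext; simp [δ, LinearMap.funLeft_apply]⟩,
        fun h0 => one_ne_zero (congrFun (congrArg Subtype.val h0) ⟦0⟧)⟩
    have := δ.finrank_range_add_finrank_ker
    rw [Module.finrank_fintype_fun_eq_card, ← Nat.card_eq_fintype_card] at this
    lia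
  have htotal : Nat.card E ≤ Module.finrank ℚ total.ker + 1 := by
    have hrange : Module.finrank ℚ total.range ≤ 1 := by
      simpa using Submodule.finrank_le total.range
    have := total.finrank_range_add_finrank_ker
    rw [Module.finrank_fintype_fun_eq_card, ← Nat.card_eq_fintype_card] at this
    lia
  obtain ⟨ψ, hψ, hψδ⟩ : ∃ ψ ∈ total.ker, ψ ∉ δ.range :=
    Set.not_subset.1 fun hle => by have := Submodule.finrank_mono hle; lia
  obtain ⟨φ, hφ⟩ := exists_add_one_eq_add (fun i => sign i * ψ (⟦i⟧)) (by simpa [total] using hψ)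
  have hdiff (i : ZMod ℓ) : φ (W.head i) - φ (W.tail i) = ψ (⟦i⟧) := by
    have := hφ i
    unfold head tail
    split_ifs with hi <;> simp only [sign, hi, if_true, Bool.false_eq_true, if_false] at this <;>
      linarith
  refine ⟨φ, fun i j hij => by rw [hdiff, hdiff, Quotient.sound hij], ?_⟩
  by_contra! hconst
  refine hψδ ⟨Quotient.lift φ hconst, ?_⟩
  ext e
  induction e using Quotient.inductionOn with | _ i
  exact hdiff i

/-- The side leaving corner `x`, as an oriented edge (`true` meaning along its generator) of the
folded graph. -/
def outDart (W : CyclicWord A ℓ) (r : Setoid (ZMod ℓ)) (x : ZMod ℓ) :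
    Quotient (W.sideSetoid r) × Bool := (⟦x⟧, (W x).2)

/-- The side arriving at corner `x`, reversed so as to leave it. -/
def inDart (W : CyclicWord A ℓ) (r : Setoid (ZMod ℓ)) (x : ZMod ℓ) :
    Quotient (W.sideSetoid r) × Bool := letterInv (W.outDart r (x - 1))

/-- The vertex of the folded graph at which an oriented edge starts. -/
def IsFolding.origin (hr : W.IsFolding r) (d : Quotient (W.sideSetoid r) × Bool) : Quotient r :=
  if d.2 then W.quotientTail r d.1 else hr.quotientHead d.1

theorem IsFolding.origin_outDart (hr : W.IsFolding r) (x : ZMod ℓ) :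
    hr.origin (W.outDart r x) = ⟦x⟧ := by
  cases hx : (W x).2 <;>
    simp [origin, outDart, quotientTail, quotientHead, tail, head, hx]

theorem IsFolding.origin_inDart (hr : W.IsFolding r) (x : ZMod ℓ) :
    hr.origin (W.inDart r x) = ⟦x⟧ := by
  cases hx : (W (x - 1)).2 <;>
    simp [origin, inDart, outDart, letterInv, quotientTail, quotientHead, tail, head, hx]

theorem outDart_ne_inDart (hW : W.IsReduced) (x : ZMod ℓ) : W.outDart r x ≠ W.inDart r x := by
  intro h
  simp only [outDart, inDart, letterInv, Prod.mk.injEq] at h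
  refine hW (x - 1) ?_
  rw [sub_add_cancel]
  exact Prod.ext (Quotient.exact h.1).1 h.2

theorem inDart_add_one (x : ZMod ℓ) : W.inDart r (x + 1) = letterInv (W.outDart r x) := by
  simp [inDart]

theorem outDart_sub_one (x : ZMod ℓ) : W.outDart r (x - 1) = letterInv (W.inDart r x) := by
  simp [inDart]

theorem apply_eq_of_outDart_eq {x y : ZMod ℓ} (h : W.outDart r x = W.outDart r y) : W x = W y :=
  Prod.ext (Quotient.exact (congrArg Prod.fst h)).1 (Prod.mk.inj h).2

variable [NeZero ℓ]

/-- A folded graph with at most as many edges as vertices is a circle: every vertex has exactly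
two outgoing darts. -/
theorem IsFolding.eq_outDart_or_eq_inDart (hr : W.IsFolding r) (hW : W.IsReduced)
    (hcard : Nat.card (Quotient (W.sideSetoid r)) ≤ Nat.card (Quotient r)) {x : ZMod ℓ}
    {d : Quotient (W.sideSetoid r) × Bool} (hd : hr.origin d = ⟦x⟧) :
    d = W.outDart r x ∨ d = W.inDart r x := by
  refine eq_or_eq_of_card_le_two_mul hr.origin (by simpa [mul_comm] using hcard) ?_
    (outDart_ne_inDart hW x) (by rw [hd, hr.origin_outDart]) (by rw [hd, hr.origin_inDart])
  intro v
  induction v using Quotient.inductionOn with | _ y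
  exact ⟨_, _, outDart_ne_inDart hW y, hr.origin_outDart y, hr.origin_inDart y⟩

theorem IsFolding.outDart_add_eq (hr : W.IsFolding r) (hW : W.IsReduced)
    (hcard : Nat.card (Quotient (W.sideSetoid r)) ≤ Nat.card (Quotient r)) {x y : ZMod ℓ}
    (h : W.outDart r x = W.outDart r y) (t : ℕ) : W.outDart r (x + t) = W.outDart r (y + t) := by
  induction t with
  | zero => simpa
  | succ t ih =>
    simp only [Nat.cast_succ, ← add_assoc]
    have hin : W.inDart r (x + t + 1) = W.inDart r (y + t + 1) := by
      rw [inDart_add_one, inDart_add_one, ih]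
    have horigin : hr.origin (W.outDart r (x + t + 1)) = ⟦y + t + 1⟧ := by
      rw [hr.origin_outDart, ← hr.origin_inDart, hin, hr.origin_inDart]
    exact (hr.eq_outDart_or_eq_inDart hW hcard horigin).resolve_right
      (hin ▸ outDart_ne_inDart hW _)

theorem IsFolding.outDart_add_eq_inDart_sub (hr : W.IsFolding r) (hW : W.IsReduced)
    (hcard : Nat.card (Quotient (W.sideSetoid r)) ≤ Nat.card (Quotient r)) {x y : ZMod ℓ}
    (h : W.outDart r x = W.inDart r y) (t : ℕ) : W.outDart r (x + t) = W.inDart r (y - t) := by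
  induction t with
  | zero => simpa
  | succ t ih =>
    simp only [Nat.cast_succ, ← add_assoc, ← sub_sub]
    have hin : W.inDart r (x + t + 1) = W.outDart r (y - t - 1) := by
      rw [inDart_add_one, outDart_sub_one, ih]
    have horigin : hr.origin (W.outDart r (x + t + 1)) = ⟦y - t - 1⟧ := by
      rw [hr.origin_outDart, ← hr.origin_inDart, hin, hr.origin_outDart]
    exact (hr.eq_outDart_or_eq_inDart hW hcard horigin).resolve_left
      (hin ▸ outDart_ne_inDart hW _)

theorem IsFolding.outDart_ne_inDart (hr : W.IsFolding r) (hW : W.IsReduced)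
    (hcard : Nat.card (Quotient (W.sideSetoid r)) ≤ Nat.card (Quotient r)) (x y : ZMod ℓ) :
    W.outDart r x ≠ W.inDart r y := by
  intro h
  have hyx : (((y - x).val : ℕ) : ZMod ℓ) = y - x := ZMod.natCast_zmod_val _
  rcases Nat.even_or_odd' (y - x).val with ⟨t, ht | ht⟩ <;>
    have ht' := hr.outDart_add_eq_inDart_sub hW hcard h t <;>
    rw [ht] at hyx <;> push_cast at hyx
  · rw [show y - t = x + t by linear_combination -hyx] at ht'
    exact CyclicWord.outDart_ne_inDart hW _ ht'
  · rw [show y - t = x + t + 1 by linear_combination -hyx, inDart_add_one] at ht'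
    simpa [letterInv] using congrArg Prod.snd ht'

theorem IsFolding.eq_of_card_le (hr : W.IsFolding r) (hW : W.IsReduced) (hprim : W.IsPrimitive)
    (hcard : Nat.card (Quotient (W.sideSetoid r)) ≤ Nat.card (Quotient r)) {x y : ZMod ℓ}
    (hxy : r x y) : x = y := by
  have hout : W.outDart r x = W.outDart r y :=
    (hr.eq_outDart_or_eq_inDart hW hcard
      ((hr.origin_outDart x).trans (Quotient.sound hxy))).resolve_right
      (hr.outDart_ne_inDart hW hcard x y)
  refine (sub_eq_zero.1 (hprim (y - x) fun i => ?_)).symm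
  have := apply_eq_of_outDart_eq (hr.outDart_add_eq hW hcard hout (i - x).val)
  rw [ZMod.natCast_zmod_val, add_sub_cancel] at this
  rw [this]
  congr 1
  ring

/-- The folded graph either is a circle, and then `W` wraps around it only once, or it has a loop
that `W` does not see, which yields a height function refining `r`. -/
theorem IsFolding.exists_stacking (hr : W.IsFolding r) (hW : W.IsReduced) (hprim : W.IsPrimitive) :
    ∃ h : ZMod ℓ → ℚ, (∀ x y, r x y → h x = h y → x = y) ∧
      ∀ i j, W.sideSetoid r i j → h (W.tail i) < h (W.tail j) → h (W.head i) < h (W.head j) := by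
  have : Finite (Setoid (ZMod ℓ)) := Finite.of_injective (fun s : Setoid (ZMod ℓ) => s.r)
    fun s t hst => Setoid.ext fun x y => Iff.of_eq (congrFun₂ hst x y)
  induction r using WellFoundedLT.induction with | _ r ih
  rcases le_or_gt (Nat.card (Quotient (W.sideSetoid r))) (Nat.card (Quotient r)) with hcard | hcard
  · exact ⟨0, fun x y hxy _ => hr.eq_of_card_le hW hprim hcard hxy, by simp⟩
  obtain ⟨φ, hφ, x₀, y₀, hxy₀, hne₀⟩ := hr.exists_height hcard
  have hlt : r ⊓ Setoid.ker φ < r := lt_of_le_not_ge inf_le_left fun hle => hne₀ (hle hxy₀).2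
  obtain ⟨h, hinj, hmono⟩ := ih _ hlt (hr.inf_ker hφ)
  obtain ⟨ε, hε, hφε⟩ := exists_pos_add_mul_lt_add_mul φ h
  have hiff : ∀ x y, φ x + ε * h x < φ y + ε * h y ↔ φ x < φ y ∨ φ x = φ y ∧ h x < h y := by
    intro x y
    rcases lt_trichotomy (φ x) (φ y) with hlt | heq | hgt
    · simp [hlt, hφε x y hlt]
    · simp [heq, hε]
    · simp [hgt.not_gt, hgt.ne', (hφε y x hgt).le]
  refine ⟨fun x => φ x + ε * h x, fun x y hxy hxy' => ?_, fun i j hij hlt => ?_⟩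
  · have heq : φ x = φ y := by
      rcases lt_trichotomy (φ x) (φ y) with hlt | heq | hgt
      · exact absurd hxy' (hφε x y hlt).ne
      · exact heq
      · exact absurd hxy' (hφε y x hgt).ne'
    refine hinj x y ⟨hxy, heq⟩ ?_
    simpa [heq, hε.ne'] using hxy'
  · have hdiff := hφ i j hij
    rw [hiff] at hlt ⊢
    rcases hlt with hlt | ⟨heq, hlt⟩
    · exact .inl (by linarith)
    · exact .inr ⟨by linarith, hmono i j ⟨hij.1, hij.2, heq⟩ hlt⟩

theorem exists_isStacking (hW : W.IsReduced) (hprim : W.IsPrimitive) : ∃ h, W.IsStacking h := by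
  have htop : W.IsFolding ⊤ := fun i j _ => by simp [Setoid.top_def]
  obtain ⟨h, hinj, hmono⟩ := htop.exists_stacking hW hprim
  exact ⟨h, fun x y => hinj x y trivial, fun i j hij => hmono i j ⟨hij, trivial⟩⟩

end Stacking

end CyclicWord

/-! ### Holonomy in Schreier graphs -/

section Holonomy

variable {A X M : Type*} [MulAction (FreeGroup A) X] [Group M]

/-- The element of the free group represented by a single letter. -/
def letterElt (p : A × Bool) : FreeGroup A := FreeGroup.mk [p]

@[simp] theorem letterElt_true (a : A) : letterElt (a, true) = FreeGroup.of a := rfl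

@[simp] theorem letterElt_false (a : A) : letterElt (a, false) = (FreeGroup.of a)⁻¹ := rfl

theorem letterElt_letterInv (p : A × Bool) : letterElt (letterInv p) = (letterElt p)⁻¹ := by
  rcases p with ⟨a, _ | _⟩ <;> simp [letterInv]

theorem mk_cons_eq_letterElt_mul (p : A × Bool) (L : List (A × Bool)) :
    FreeGroup.mk (p :: L) = letterElt p * FreeGroup.mk L := by
  simp [letterElt, FreeGroup.mul_mk]

/-- The edge of the Schreier graph on `X` traversed by the letter `p` starting at `v`. The edge
`(v, a)` is directed from `v` to `a⁻¹ • v`, so that reading `g` from `v` leads to `g⁻¹ • v`. -/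
def letterEdge (v : X) (p : A × Bool) : X × A :=
  if p.2 then (v, p.1) else (FreeGroup.of p.1 • v, p.1)

theorem letterEdge_eq_iff {v v' : X} {p p' : A × Bool} :
    letterEdge v p = letterEdge v' p' ↔
      v = v' ∧ p = p' ∨ p' = letterInv p ∧ v' = (letterElt p)⁻¹ • v := by
  rcases p with ⟨a, _ | _⟩ <;> rcases p' with ⟨b, _ | _⟩ <;>
    simp only [letterEdge, letterInv, letterElt_true, letterElt_false, Prod.mk.injEq, if_true,
      Bool.false_eq_true, if_false, Bool.not_true, Bool.not_false, inv_inv, reduceCtorEq, and_false,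
      and_true, or_false, false_and, false_or] <;>
    constructor <;> rintro ⟨h, rfl⟩ <;> simp_all [eq_comm]

/-- The edges of the Schreier graph on `X` traversed by reading a word from `v`. -/
def pathEdges : X → List (A × Bool) → List (X × A)
  | _, [] => []
  | v, p :: L => letterEdge v p :: pathEdges ((letterElt p)⁻¹ • v) L

theorem pathEdges_append (v : X) (L L' : List (A × Bool)) :
    pathEdges v (L ++ L') = pathEdges v L ++ pathEdges ((FreeGroup.mk L)⁻¹ • v) L' := by
  induction L generalizing v with
  | nil => simp [pathEdges, ← FreeGroup.one_eq_mk]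
  | cons p L ih => simp [pathEdges, ih, mk_cons_eq_letterElt_mul, mul_smul]

/-- The product of the values of `f` along the path in the Schreier graph on `X` reading `g` from
`v`, an edge traversed backwards contributing the inverse of its value. It is one component of a
homomorphism to a wreath product, which makes its dependence on `g` a crossed homomorphism. -/
def holonomy (f : X × A → M) (g : FreeGroup A) (v : X) : M :=
  (FreeGroup.lift (fun a => (⟨fun v => f (v, a), FreeGroup.of a⟩ :
    (X → M) ⋊[mulAutArrow] FreeGroup A)) g).left v

variable (f : X × A → M) (g h : FreeGroup A) (v : X)

@[simp] theorem holonomy_one : holonomy f 1 v = 1 := by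
  simp [holonomy]

@[simp] theorem holonomy_of (a : A) : holonomy f (FreeGroup.of a) v = f (v, a) := by
  simp [holonomy]

theorem holonomy_mul : holonomy f (g * h) v = holonomy f g v * holonomy f h (g⁻¹ • v) := by
  let F := FreeGroup.lift fun a =>
    (⟨fun v => f (v, a), FreeGroup.of a⟩ : (X → M) ⋊[mulAutArrow] FreeGroup A)
  have hright : SemidirectProduct.rightHom.comp F = MonoidHom.id _ := by ext a; simp [F]
  change (F (g * h)).left v = (F g).left v * (F h).left (g⁻¹ • v)
  rw [map_mul, SemidirectProduct.mul_left, show (F g).right = g from DFunLike.congr_fun hright g]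
  rfl

theorem holonomy_inv : holonomy f g⁻¹ v = (holonomy f g (g • v))⁻¹ := by
  have := holonomy_mul f g g⁻¹ (g • v)
  rw [mul_inv_cancel, holonomy_one, inv_smul_smul] at this
  exact (inv_eq_of_mul_eq_one_right this.symm).symm

theorem holonomy_letterElt (p : A × Bool) : holonomy f (letterElt p) v =
    if p.2 then f (letterEdge v p) else (f (letterEdge v p))⁻¹ := by
  rcases p with ⟨a, _ | _⟩ <;> simp [letterEdge, holonomy_inv]

variable {f g v} in
theorem holonomy_conj (hgv : g • h⁻¹ • v = h⁻¹ • v) :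
    holonomy f (h * g * h⁻¹) v = holonomy f h v * holonomy f g (h⁻¹ • v) * (holonomy f h v)⁻¹ := by
  have hgv' : g⁻¹ • h⁻¹ • v = h⁻¹ • v := inv_smul_eq_iff.2 hgv.symm
  rw [holonomy_mul, holonomy_mul, mul_inv_rev, mul_smul, hgv', holonomy_inv, smul_inv_smul]

theorem holonomy_comp_of (φ : FreeGroup A →* M) :
    holonomy (fun e : X × A => φ (FreeGroup.of e.2)) g v = φ g := by
  induction g using FreeGroup.induction_on generalizing v with
  | C1 => simp
  | of a => simp
  | inv_of a ih => rw [holonomy_inv, ih, map_inv]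
  | mul g h ihg ihh => rw [holonomy_mul, ihg, ihh, map_mul]

variable {f v} in
theorem holonomy_congr {f' : X × A → M} {L : List (A × Bool)}
    (hL : ∀ e ∈ pathEdges v L, f e = f' e) :
    holonomy f (FreeGroup.mk L) v = holonomy f' (FreeGroup.mk L) v := by
  induction L generalizing v with
  | nil => simp [← FreeGroup.one_eq_mk]
  | cons p L ih =>
    simp only [pathEdges, List.forall_mem_cons] at hL
    rw [mk_cons_eq_letterElt_mul, holonomy_mul, holonomy_mul, holonomy_letterElt,
      holonomy_letterElt, hL.1, ih hL.2]

variable {f g h v} in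
theorem holonomy_conj_mem_of_stabilizer_eq_closure {gens : Set (FreeGroup A)} {T : Subgroup M}
    (hgens : MulAction.stabilizer (FreeGroup A) v = Subgroup.closure gens)
    (hT : ∀ s ∈ gens, holonomy f s v ∈ T) (hgv : g • h⁻¹ • v = h⁻¹ • v) :
    holonomy f h v * holonomy f g (h⁻¹ • v) * (holonomy f h v)⁻¹ ∈ T := by
  have hfix {s : FreeGroup A} (hs : s ∈ Subgroup.closure gens) : s • v = v :=
    MulAction.mem_stabilizer_iff.1 (hgens ▸ hs)
  have hmem : h * g * h⁻¹ ∈ Subgroup.closure gens := by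
    rw [← hgens, MulAction.mem_stabilizer_iff, mul_smul, mul_smul, hgv, smul_inv_smul]
  rw [← holonomy_conj h hgv]
  generalize h * g * h⁻¹ = y at hmem ⊢
  induction hmem using Subgroup.closure_induction with
  | mem s hs => exact hT s hs
  | one => simp
  | mul s t hs ht ihs iht =>
    rw [holonomy_mul, inv_smul_eq_iff.2 (hfix hs).symm]
    exact mul_mem ihs iht
  | inv s hs ih =>
    rw [holonomy_inv, hfix hs]
    exact inv_mem ih

end Holonomy

section PathIntegral

variable {A X : Type*} [MulAction (FreeGroup A) X] (k : Type*) [CommRing k]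

/-- Integration of `k`-valued functions on the edges of the Schreier graph on `X` along the path
reading `g` from `v`. -/
def pathIntegral (g : FreeGroup A) (v : X) : Module.Dual k (X × A → k) :=
  (holonomy (fun e => Multiplicative.ofAdd (LinearMap.proj e : Module.Dual k (X × A → k)))
    g v).toAdd

variable (g h : FreeGroup A) (v : X)

@[simp] theorem pathIntegral_of (a : A) :
    pathIntegral k (FreeGroup.of a) v = LinearMap.proj (v, a) := by
  simp [pathIntegral]

theorem pathIntegral_mul :
    pathIntegral k (g * h) v = pathIntegral k g v + pathIntegral k h (g⁻¹ • v) := by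
  simp [pathIntegral, holonomy_mul]

theorem pathIntegral_inv : pathIntegral k g⁻¹ v = -pathIntegral k g (g • v) := by
  simp [pathIntegral, holonomy_inv]

variable {g v} in
theorem pathIntegral_conj (hgv : g • h⁻¹ • v = h⁻¹ • v) :
    pathIntegral k (h * g * h⁻¹) v = pathIntegral k g (h⁻¹ • v) := by
  simp [pathIntegral, holonomy_conj h hgv]

theorem pathIntegral_mem_of_stabilizer_eq_closure [MulAction.IsPretransitive (FreeGroup A) X]
    {v₀ : X} {gens : Set (FreeGroup A)}
    (hgens : MulAction.stabilizer (FreeGroup A) v₀ = Subgroup.closure gens)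
    {U : Submodule k (Module.Dual k (X × A → k))} (hU : ∀ h ∈ gens, pathIntegral k h v₀ ∈ U)
    {g : FreeGroup A} {v : X} (hg : g • v = v) : pathIntegral k g v ∈ U := by
  obtain ⟨y, rfl⟩ := MulAction.exists_smul_eq (FreeGroup A) v₀ v
  have := holonomy_conj_mem_of_stabilizer_eq_closure (T := U.toAddSubgroup.toSubgroup) hgens hU
    (h := y⁻¹) (by simpa using hg)
  rwa [mul_inv_cancel_comm, inv_inv] at this

end PathIntegral

/-- The Euler characteristic bound for a finite subgraph of a Schreier graph whose loop integrals
are spanned by finitely many functionals: a function on its edges is determined by the values of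
these functionals and by its integrals along paths from `v₀` to the other vertices. -/
theorem card_edges_add_one_le {A X : Type*} [MulAction (FreeGroup A) X]
    [MulAction.IsPretransitive (FreeGroup A) X] (k : Type*) [Field k]
    {G : Finset (Module.Dual k (X × A → k))}
    (hG : ∀ (g : FreeGroup A) (v : X), g • v = v →
      pathIntegral k g v ∈ Submodule.span k (G : Set _))
    {E : Finset (X × A)} {V : Finset X} (hV : V.Nonempty)
    (hE : ∀ e ∈ E, e.1 ∈ V ∧ (FreeGroup.of e.2)⁻¹ • e.1 ∈ V) :
    E.card + 1 ≤ V.card + G.card := by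
  classical
  obtain ⟨v₀, hv₀⟩ := hV
  have htrans (v : X) : ∃ g : FreeGroup A, g⁻¹ • v₀ = v :=
    let ⟨g, hg⟩ := MulAction.exists_smul_eq (FreeGroup A) v₀ v
    ⟨g⁻¹, by simpa using hg⟩
  choose path hpath using htrans
  let extend : (E → k) →ₗ[k] (X × A → k) := Function.ExtendByZero.linearMap k Subtype.val
  let Φ : (E → k) →ₗ[k] (G → k) × (V.erase v₀ → k) :=
    (LinearMap.prod (LinearMap.pi fun φ : G => φ.1)
      (LinearMap.pi fun v : V.erase v₀ => pathIntegral k (path v) v₀)).comp extend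
  have hΦ : Function.Injective Φ := by
    rw [injective_iff_map_eq_zero]
    intro f hf
    have hloop (g : FreeGroup A) (v : X) (hg : g • v = v) : pathIntegral k g v (extend f) = 0 := by
      have hle : Submodule.span k (G : Set (Module.Dual k (X × A → k))) ≤
          LinearMap.ker (Module.Dual.eval k _ (extend f)) :=
        Submodule.span_le.2 fun φ hφ => congrFun (congrArg Prod.fst hf) ⟨φ, hφ⟩
      exact hle (hG g v hg)
    have hpot (v : X) (hv : v ∈ V) : pathIntegral k (path v) v₀ (extend f) = 0 := by
      by_cases hvv : v = v₀
      · exact hloop _ _ (inv_smul_eq_iff.1 ((hpath v).trans hvv)).symm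
      · exact congrFun (congrArg Prod.snd hf) ⟨v, Finset.mem_erase.2 ⟨hvv, hv⟩⟩
    ext ⟨⟨v, a⟩, he⟩
    obtain ⟨hv, hv'⟩ := hE _ he
    have hback (v : X) : path v • v = v₀ := (inv_smul_eq_iff.1 (hpath v)).symm
    have := hloop (path v * FreeGroup.of a * (path ((FreeGroup.of a)⁻¹ • v))⁻¹) v₀ (by
      rw [mul_smul, mul_smul, hpath, smul_inv_smul, hback])
    simpa [pathIntegral_mul, pathIntegral_inv, hpath, mul_smul, hback, hpot v hv, hpot _ hv',
      extend, Subtype.val_injective.extend_apply _ _ (⟨(v, a), he⟩ : E)] using this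
  have hdim := LinearMap.finrank_le_finrank_of_injective hΦ
  simp only [Module.finrank_prod, Module.finrank_fintype_fun_eq_card, Fintype.card_coe,
    Finset.card_erase_of_mem hv₀] at hdim
  have := Finset.card_pos.2 ⟨v₀, hv₀⟩
  lia

/-! ### Cells and their corners -/

theorem card_filter_isMax_fiber {α β κ : Type*} [DecidableEq β] [LinearOrder κ] (K : Finset α)
    {π : α → β} {height : α → κ} (hinj : ∀ x y, π x = π y → height x = height y → x = y)
    {p : α → Prop} [DecidablePred p] (hp : ∀ x, p x ↔ ∀ y ∈ K, π y = π x → height y ≤ height x) :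
    (K.filter p).card = (K.image π).card := by
  refine Finset.card_bij (fun x _ => π x) ?_ ?_ ?_
  · exact fun x hx => Finset.mem_image_of_mem _ (Finset.mem_filter.1 hx).1
  · intro x hx y hy hxy
    rw [Finset.mem_filter, hp] at hx hy
    exact hinj x y hxy (le_antisymm (hy.2 x hx.1 hxy) (hx.2 y hy.1 hxy.symm))
  · intro b hb
    obtain ⟨x, hx, rfl⟩ := Finset.mem_image.1 hb
    classical
    obtain ⟨y, hy, hmax⟩ := (K.filter fun y => π y = π x).exists_max_image height
      ⟨x, Finset.mem_filter.2 ⟨hx, rfl⟩⟩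
    rw [Finset.mem_filter] at hy
    refine ⟨y, Finset.mem_filter.2 ⟨hy.1, (hp y).2 fun z hz hzy => ?_⟩, hy.2⟩
    exact hmax z (Finset.mem_filter.2 ⟨hz, hzy.trans hy.2⟩)

namespace CyclicWord

section Corners

variable {A : Type*} {ℓ : ℕ} (W : CyclicWord A ℓ)

/-- The word of length `t` read around the cyclic word from corner `i`. -/
def arc (i : ZMod ℓ) (t : ℕ) : List (A × Bool) := (List.range t).map fun s : ℕ => W (i + s)

/-- The element of the free group represented by an arc. -/
def arcProd (i : ZMod ℓ) (t : ℕ) : FreeGroup A := FreeGroup.mk (W.arc i t)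

@[simp] theorem length_arc (i : ZMod ℓ) (t : ℕ) : (W.arc i t).length = t := by simp [arc]

theorem arc_add (i : ZMod ℓ) (s t : ℕ) : W.arc i (s + t) = W.arc i s ++ W.arc (i + s) t := by
  simp [arc, List.range_add, add_assoc]

@[simp] theorem arc_one (i : ZMod ℓ) : W.arc i 1 = [W i] := by simp [arc]

@[simp] theorem arcProd_zero (i : ZMod ℓ) : W.arcProd i 0 = 1 := by
  simp [arcProd, arc, FreeGroup.one_eq_mk]

@[simp] theorem arcProd_one (i : ZMod ℓ) : W.arcProd i 1 = letterElt (W i) := by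
  simp [arcProd, letterElt]

theorem arcProd_add (i : ZMod ℓ) (s t : ℕ) :
    W.arcProd i (s + t) = W.arcProd i s * W.arcProd (i + s) t := by
  rw [arcProd, arc_add, ← FreeGroup.mul_mk, arcProd, arcProd]

theorem tail_injective {W : CyclicWord A ℓ} (hW : W.IsReduced) {i j : ZMod ℓ}
    (hij : (W i).1 = (W j).1) (h : W.tail i = W.tail j) : i = j := by
  have hopp {i j : ZMod ℓ} (hij : (W i).1 = (W j).1) (hi : (W i).2 = true)
      (hj : (W j).2 = false) : i ≠ j + 1 := by
    rintro rfl
    exact hW j (Prod.ext hij (by simp [letterInv, hi, hj]))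
  cases hi : (W i).2 <;> cases hj : (W j).2 <;>
    simp only [tail, hi, hj, if_true, Bool.false_eq_true, if_false] at h
  · exact add_right_cancel h
  · exact (hopp hij.symm hj hi h.symm).elim
  · exact (hopp hij hi hj h).elim
  · exact h

variable {X : Type*} [MulAction (FreeGroup A) X]

/-- The step along the boundary of a cell. A pair `(v, i)` stands for corner `i` of the polygon
labelled by `W` that is attached to the Schreier graph on `X` with this corner at the vertex `v`. -/
def next : Equiv.Perm (X × ZMod ℓ) where
  toFun x := ((letterElt (W x.2))⁻¹ • x.1, x.2 + 1)
  invFun x := (letterElt (W (x.2 - 1)) • x.1, x.2 - 1)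
  left_inv x := by simp
  right_inv x := by simp

theorem next_apply (x : X × ZMod ℓ) : W.next x = ((letterElt (W x.2))⁻¹ • x.1, x.2 + 1) := rfl

theorem next_iterate_apply (t : ℕ) (x : X × ZMod ℓ) :
    W.next^[t] x = ((W.arcProd x.2 t)⁻¹ • x.1, x.2 + t) := by
  induction t with
  | zero => simp
  | succ t ih =>
    rw [Function.iterate_succ_apply', ih, next_apply, arcProd_add]
    simp [mul_smul, add_assoc]

theorem dvd_of_next_iterate_eq {t : ℕ} {x : X × ZMod ℓ} (hx : W.next^[t] x = x) : ℓ ∣ t := by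
  simpa [next_iterate_apply, ZMod.natCast_eq_zero_iff] using congrArg Prod.snd hx

theorem sameCycle_next_iterate (t : ℕ) (x : X × ZMod ℓ) : W.next.SameCycle x (W.next^[t] x) :=
  Equiv.Perm.sameCycle_pow_right.2 .rfl

/-- The edge of the Schreier graph to which the side of a cell after the corner `x` is glued. -/
def side (x : X × ZMod ℓ) : X × A := letterEdge x.1 (W x.2)

theorem pathEdges_arc (t : ℕ) (x : X × ZMod ℓ) :
    pathEdges x.1 (W.arc x.2 t) = (List.range t).map fun s => W.side (W.next^[s] x) := by
  induction t with
  | zero => rfl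
  | succ t ih =>
    rw [arc_add, pathEdges_append, ih, List.range_succ, List.map_append, arc_one, pathEdges,
      pathEdges, List.map_singleton, next_iterate_apply, arcProd, side]

/-- The corner of a cell at which the side after `x` starts when traversed in the direction of its
generator. -/
def tailCorner (x : X × ZMod ℓ) : X × ZMod ℓ := if (W x.2).2 then x else W.next x

/-- The corner of a cell at which the side after `x` ends when traversed in the direction of its
generator. -/
def headCorner (x : X × ZMod ℓ) : X × ZMod ℓ := if (W x.2).2 then W.next x else x

theorem tailCorner_eq (x : X × ZMod ℓ) : W.tailCorner x = ((W.side x).1, W.tail x.2) := by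
  rcases hx : W x.2 with ⟨a, _ | _⟩ <;> simp [tailCorner, side, letterEdge, tail, next_apply, hx]

theorem headCorner_eq (x : X × ZMod ℓ) :
    W.headCorner x = ((FreeGroup.of (W.side x).2)⁻¹ • (W.side x).1, W.head x.2) := by
  rcases hx : W x.2 with ⟨a, _ | _⟩ <;> simp [headCorner, side, letterEdge, head, next_apply, hx]

theorem side_snd (x : X × ZMod ℓ) : (W.side x).2 = (W x.2).1 := by
  unfold side letterEdge
  split_ifs <;> rfl

theorem tailCorner_injective : Function.Injective
    fun x : X × ZMod ℓ => (W.tailCorner x, x.2) := by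
  intro x y hxy
  obtain ⟨htail, hsnd⟩ := Prod.ext_iff.1 hxy
  simp only [tailCorner, show x.2 = y.2 from hsnd] at htail
  split_ifs at htail
  · exact htail
  · exact W.next.injective htail

end Corners

section Tops

variable {A X : Type*} [MulAction (FreeGroup A) X] {ℓ : ℕ} (W : CyclicWord A ℓ)
  (h : ZMod ℓ → ℚ) (K : Finset (X × ZMod ℓ))

/-- No corner in `K` at the vertex of `x` is higher than `x`. -/
def IsTopCorner (x : X × ZMod ℓ) : Prop := ∀ y ∈ K, y.1 = x.1 → h y.2 ≤ h x.2

/-- No side from `K` on the edge below the side after `x` is higher than that side. -/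
def IsTopSide (x : X × ZMod ℓ) : Prop :=
  ∀ y ∈ K, W.side y = W.side x → h (W.tail y.2) ≤ h (W.tail x.2)

/-- The boundary path of a cell reaches the top of the stack at the side after `x`. -/
def IsStart (x : X × ZMod ℓ) : Prop := W.IsTopSide h K x ∧ ¬ IsTopCorner h K x

variable {W h K} {x : X × ZMod ℓ}

theorem tailCorner_mem (hK : ∀ x, W.next x ∈ K ↔ x ∈ K) : W.tailCorner x ∈ K ↔ x ∈ K := by
  unfold tailCorner
  split_ifs <;> simp [hK]

theorem headCorner_mem (hK : ∀ x, W.next x ∈ K ↔ x ∈ K) : W.headCorner x ∈ K ↔ x ∈ K := by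
  unfold headCorner
  split_ifs <;> simp [hK]

theorem isTopSide_of_tailCorner (hK : ∀ x, W.next x ∈ K ↔ x ∈ K)
    (hx : IsTopCorner h K (W.tailCorner x)) : W.IsTopSide h K x := by
  intro y hy hyx
  have := hx _ ((tailCorner_mem hK).2 hy)
  simp only [tailCorner_eq] at this
  exact this (congrArg Prod.fst hyx)

theorem isTopSide_of_headCorner (hS : W.IsStacking h) (hK : ∀ x, W.next x ∈ K ↔ x ∈ K)
    (hx : IsTopCorner h K (W.headCorner x)) : W.IsTopSide h K x := by
  intro y hy hyx
  have := hx _ ((headCorner_mem hK).2 hy)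
  simp only [headCorner_eq, hyx, true_implies] at this
  contrapose! this
  exact hS.head_lt_head _ _ (by rw [← side_snd, ← side_snd, hyx]) this

theorem IsTopCorner.isTopSide (hS : W.IsStacking h) (hK : ∀ x, W.next x ∈ K ↔ x ∈ K)
    (hx : IsTopCorner h K x) : W.IsTopSide h K x := by
  cases hp : (W x.2).2
  · exact isTopSide_of_headCorner hS hK (by simpa [headCorner, hp])
  · exact isTopSide_of_tailCorner hK (by simpa [tailCorner, hp])

theorem isTopSide_of_next (hS : W.IsStacking h) (hK : ∀ x, W.next x ∈ K ↔ x ∈ K)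
    (hx : IsTopCorner h K (W.next x)) : W.IsTopSide h K x := by
  cases hp : (W x.2).2
  · exact isTopSide_of_tailCorner hK (by simpa [tailCorner, hp])
  · exact isTopSide_of_headCorner hS hK (by simpa [headCorner, hp])

theorem isTopCorner_of_iterate (hS : W.IsStacking h) (hK : ∀ x, W.next x ∈ K ↔ x ∈ K) {t : ℕ}
    (htop : IsTopCorner h K (W.next^[t] x)) (hstart : ∀ s < t, ¬ W.IsStart h K (W.next^[s] x)) :
    IsTopCorner h K x := by
  induction t with
  | zero => exact htop
  | succ t ih =>
    rw [Function.iterate_succ_apply'] at htop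
    refine ih (not_not.1 fun hnot => ?_) fun s hs => hstart s (hs.trans t.lt_succ_self)
    exact hstart t t.lt_succ_self ⟨isTopSide_of_next hS hK htop, hnot⟩

theorem exists_isTopCorner_iterate [NeZero ℓ] (h : ZMod ℓ → ℚ) (K : Finset (X × ZMod ℓ))
    (x : X × ZMod ℓ) : ∃ t < ℓ, IsTopCorner h K (W.next^[t] x) := by
  obtain ⟨i, hi⟩ := Finite.exists_max h
  exact ⟨(i - x.2).val, ZMod.val_lt _, fun y _ _ => by simpa [next_iterate_apply] using hi y.2⟩

theorem side_eq_of_height_eq (hW : W.IsReduced) (hS : W.IsStacking h) {y : X × ZMod ℓ}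
    (hxy : W.side x = W.side y) (hh : h (W.tail x.2) = h (W.tail y.2)) : x = y := by
  have hsnd : x.2 = y.2 :=
    tail_injective hW (by rw [← side_snd, ← side_snd, hxy]) (hS.injective hh)
  exact W.tailCorner_injective (by simp [tailCorner_eq, hxy, hsnd])

open Classical in
theorem card_isStart_add_card_vertices (hW : W.IsReduced) (hS : W.IsStacking h)
    (hK : ∀ x, W.next x ∈ K ↔ x ∈ K) :
    (K.filter (W.IsStart h K)).card + (K.image Prod.fst).card = (K.image W.side).card := by
  have hcorners : (K.filter (IsTopCorner h K)).card = (K.image Prod.fst).card :=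
    card_filter_isMax_fiber K (fun x y hxy hh => Prod.ext hxy (hS.injective hh)) fun _ => .rfl
  have hsides : (K.filter (W.IsTopSide h K)).card = (K.image W.side).card :=
    card_filter_isMax_fiber K (fun x y => side_eq_of_height_eq hW hS) fun _ => .rfl
  have hfilter : (K.filter (W.IsTopSide h K)).filter (IsTopCorner h K) =
      K.filter (IsTopCorner h K) := by
    rw [Finset.filter_filter]
    exact Finset.filter_congr fun x _ => and_iff_right_of_imp fun hx => hx.isTopSide hS hK
  have hstart : (K.filter (W.IsTopSide h K)).filter (fun x => ¬ IsTopCorner h K x) =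
      K.filter (W.IsStart h K) := by
    ext x
    simp [IsStart, and_assoc]
  rw [← hcorners, ← hsides, ← hstart, ← hfilter, add_comm,
    Finset.card_filter_add_card_filter_not]

open Classical in
theorem card_isStart_lt [MulAction.IsPretransitive (FreeGroup A) X] (hW : W.IsReduced)
    (hS : W.IsStacking h) (hK : ∀ x, W.next x ∈ K ↔ x ∈ K) (hne : K.Nonempty)
    {G : Finset (Module.Dual ℚ (X × A → ℚ))}
    (hG : ∀ (g : FreeGroup A) (v : X), g • v = v →
      pathIntegral ℚ g v ∈ Submodule.span ℚ (G : Set _)) :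
    (K.filter (W.IsStart h K)).card < G.card := by
  have hcard := card_isStart_add_card_vertices hW hS hK
  have heuler := card_edges_add_one_le ℚ hG (hne.image Prod.fst) (E := K.image W.side) (by
    intro e he
    obtain ⟨x, hx, rfl⟩ := Finset.mem_image.1 he
    constructor
    · exact Finset.mem_image.2 ⟨_, (tailCorner_mem hK).2 hx, congrArg Prod.fst (W.tailCorner_eq x)⟩
    · exact Finset.mem_image.2 ⟨_, (headCorner_mem hK).2 hx, congrArg Prod.fst (W.headCorner_eq x)⟩)
  lia

end Tops

end CyclicWord

/-! ### Runs of lone corners -/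

theorem exists_iterate_eq_of_sameCycle {α : Type*} {f : Equiv.Perm α} {x y : α}
    (hx : x ∈ Function.periodicPts f) (hxy : f.SameCycle x y) : ∃ t : ℕ, f^[t] x = y := by
  obtain ⟨i, rfl⟩ := hxy
  have hpos := Function.minimalPeriod_pos_of_mem_periodicPts hx
  have hmod : f ^ (i % (Function.minimalPeriod f x : ℤ)) • x = f ^ i • x :=
    MulAction.zpow_smul_mod_minimalPeriod f x i
  rw [← Int.toNat_of_nonneg (Int.emod_nonneg i (Nat.cast_ne_zero.2 hpos.ne')), zpow_natCast] at hmod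
  exact ⟨_, (congrFun (Equiv.Perm.iterate_eq_pow f _) x).trans hmod⟩

theorem exists_fiber_subsingleton_of_card_add_two_le {α β : Type*} [DecidableEq β] {K U : Finset α}
    (π : α → β) (hUK : U ⊆ K) (hcard : U.card + 2 ≤ 2 * (K.image π).card) :
    (∃ z ∈ K, ∀ x ∈ U, π x ≠ π z) ∨
      ∃ z ∈ K, ∃ z' ∈ K, π z ≠ π z' ∧ (∀ x ∈ U, π x = π z → x = z) ∧
        ∀ x ∈ U, π x = π z' → x = z' := by
  classical
  let fiber (b : β) : Finset α := U.filter fun x => π x = b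
  by_cases hempty : ∃ b ∈ K.image π, fiber b = ∅
  · obtain ⟨b, hb, hfiber⟩ := hempty
    obtain ⟨z, hz, rfl⟩ := Finset.mem_image.1 hb
    exact .inl ⟨z, hz, Finset.filter_eq_empty_iff.1 hfiber⟩
  right
  have hpos (b) (hb : b ∈ K.image π) : 0 < (fiber b).card :=
    Finset.card_pos.2 (Finset.nonempty_iff_ne_empty.2 fun h => hempty ⟨b, hb, h⟩)
  let B := (K.image π).filter fun b => (fiber b).card = 1
  have hB : 1 < B.card := by
    have hsum := Finset.sum_le_sum (s := K.image π) (f := fun _ => 2)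
      (g := fun b => (fiber b).card + if (fiber b).card = 1 then 1 else 0) fun b hb => by
        have := hpos b hb
        split_ifs <;> lia
    rw [Finset.sum_add_distrib, ← Finset.card_filter, ← Finset.card_eq_sum_card_fiberwise
      fun x hx => Finset.mem_image_of_mem π (hUK hx), Finset.sum_const, smul_eq_mul] at hsum
    change _ ≤ U.card + B.card at hsum
    lia
  have hrep (b) (hb : b ∈ B) : ∃ z ∈ K, π z = b ∧ ∀ x ∈ U, π x = b → x = z := by
    obtain ⟨z, hz⟩ := Finset.card_eq_one.1 (Finset.mem_filter.1 hb).2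
    have hzU := Finset.mem_filter.1 (hz ▸ Finset.mem_singleton_self z : z ∈ fiber b)
    exact ⟨z, hUK hzU.1, hzU.2, fun x hx hxb =>
      Finset.mem_singleton.1 (hz ▸ Finset.mem_filter.2 ⟨hx, hxb⟩)⟩
  obtain ⟨b, hb, b', hb', hne⟩ := Finset.one_lt_card.1 hB
  obtain ⟨z, hz, rfl, hzU⟩ := hrep b hb
  obtain ⟨z', hz', rfl, hzU'⟩ := hrep b' hb'
  exact ⟨z, hz, z', hz', hne, hzU, hzU'⟩

namespace CyclicWord

section ArcHolonomy

variable {A X M : Type*} [MulAction (FreeGroup A) X] [Group M] {ℓ : ℕ} (W : CyclicWord A ℓ)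
  (f : X × A → M)

/-- The holonomy of `f` along the `t` sides of a cell that follow the corner `x`. -/
def arcHolonomy (t : ℕ) (x : X × ZMod ℓ) : M := holonomy f (W.arcProd x.2 t) x.1

theorem arcHolonomy_add (s t : ℕ) (x : X × ZMod ℓ) :
    W.arcHolonomy f (s + t) x = W.arcHolonomy f s x * W.arcHolonomy f t (W.next^[s] x) := by
  simp only [arcHolonomy, arcProd_add, holonomy_mul, next_iterate_apply]

variable {W} {m N : ℕ} {x : X × ZMod ℓ}

theorem arcHolonomy_mul (hx : W.next^[m] x = x) (q : ℕ) :
    W.arcHolonomy f (m * q) x = W.arcHolonomy f m x ^ q := by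
  induction q with
  | zero => simp [arcHolonomy]
  | succ q ih =>
    have hq : W.next^[m * q] x = x := Function.IsPeriodicPt.mul_const hx q
    rw [mul_add, mul_one, arcHolonomy_add, ih, hq, pow_succ]

theorem semiconjBy_arcHolonomy (hx : W.next^[N] x = x) (t : ℕ) :
    SemiconjBy (W.arcHolonomy f t x) (W.arcHolonomy f N (W.next^[t] x)) (W.arcHolonomy f N x) := by
  rw [SemiconjBy, ← arcHolonomy_add, add_comm, arcHolonomy_add, hx]

end ArcHolonomy

section Runs

variable {A X : Type*} [MulAction (FreeGroup A) X] {ℓ : ℕ} (W : CyclicWord A ℓ)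
  (K : Finset (X × ZMod ℓ))

/-- The corner `x` is the only corner from `K` at its vertex. -/
def IsLone (x : X × ZMod ℓ) : Prop := ∀ y ∈ K, y.1 = x.1 → y = x

/-- The side after `x` is the only side from `K` on the edge below it. -/
def IsFree (x : X × ZMod ℓ) : Prop := ∀ y ∈ K, W.side y = W.side x → y = x

/-- In the boundary cycle of the cell with corner `z`, only `z` can be a start for the stacking `h`
or for the reversed stacking `-h`. -/
def StartsOnlyAt (h : ZMod ℓ → ℚ) (z : X × ZMod ℓ) : Prop :=
  ∀ x ∈ K, W.next.SameCycle z x → W.IsStart h K x ∨ W.IsStart (-h) K x → x = z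

/-- Up to homology over `k`, every loop of the Schreier graph on `X` is a combination of the loops
of length `N` around the cells whose corners are in `K`. -/
def BoundariesSpanLoops (k : Type*) [CommRing k] (N : ℕ) : Prop :=
  ∀ (g : FreeGroup A) (v : X), g • v = v → pathIntegral k g v ∈
    Submodule.span k ((fun x : X × ZMod ℓ => pathIntegral k (W.arcProd x.2 N) x.1) '' K)

variable {W K} {h : ZMod ℓ → ℚ} {N : ℕ} {x z : X × ZMod ℓ}

theorem next_iterate_mem (hK : ∀ x, W.next x ∈ K ↔ x ∈ K) (t : ℕ) :
    W.next^[t] x ∈ K ↔ x ∈ K := by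
  induction t with
  | zero => rfl
  | succ t ih => rw [Function.iterate_succ_apply', hK, ih]

omit [MulAction (FreeGroup A) X] in
theorem isLone_of_isTopCorner (hS : W.IsStacking h) (htop : IsTopCorner h K x)
    (htop' : IsTopCorner (-h) K x) : IsLone K x := by
  intro y hy hyx
  have hle : h x.2 ≤ h y.2 := by simpa using htop' y hy hyx
  exact Prod.ext hyx (hS.injective ((htop y hy hyx).antisymm hle))

theorem isFree_of_isLone_next (hW : W.IsReduced) (hK : ∀ x, W.next x ∈ K ↔ x ∈ K)
    (hx : IsLone K (W.next x)) : W.IsFree K x := by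
  intro y hy hyx
  rcases letterEdge_eq_iff.1 hyx with ⟨hv, hp⟩ | ⟨hp, hv⟩
  · exact W.next.injective (hx _ ((hK y).2 hy) (by simp [next_apply, hv, hp]))
  · have hyx' : y = W.next x := hx y hy <| by
      rw [next_apply, hp, hv, letterElt_letterInv, inv_inv, smul_inv_smul]
    refine absurd ?_ (hW x.2)
    rw [hp, letterInv_letterInv, hyx', next_apply]

/-- Between the start `z` and the return to `z` the boundary path stays at the top once it has
reached it, and it does reach it within every `ℓ` steps. -/
theorem isTopCorner_iterate_of_isStart_imp [NeZero ℓ] (hS : W.IsStacking h)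
    (hK : ∀ x, W.next x ∈ K ↔ x ∈ K) (hz : z ∈ K)
    (hstart : ∀ x ∈ K, W.next.SameCycle z x → W.IsStart h K x → x = z) {t : ℕ} (ht : 0 < t)
    (htm : t + ℓ ≤ Function.minimalPeriod W.next z + 1) :
    IsTopCorner h K (W.next^[t] z) := by
  obtain ⟨r, hr, htop⟩ := exists_isTopCorner_iterate (W := W) h K (W.next^[t] z)
  refine isTopCorner_of_iterate hS hK htop fun s hs hst => ?_
  rw [← Function.iterate_add_apply] at hst
  have hzs := hstart _ ((next_iterate_mem hK _).2 hz) (W.sameCycle_next_iterate _ z) hst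
  have := Function.IsPeriodicPt.eq_zero_of_lt_minimalPeriod (n := s + t) hzs (by lia)
  lia

theorem StartsOnlyAt.isLone_iterate [NeZero ℓ] (hS : W.IsStacking h)
    (hK : ∀ x, W.next x ∈ K ↔ x ∈ K) (hz : z ∈ K) (hstart : W.StartsOnlyAt K h z) {t : ℕ}
    (ht : 0 < t) (htm : t + ℓ ≤ Function.minimalPeriod W.next z + 1) :
    IsLone K (W.next^[t] z) := by
  refine isLone_of_isTopCorner hS ?_ ?_
  · exact isTopCorner_iterate_of_isStart_imp hS hK hz
      (fun x hx hzx hst => hstart x hx hzx (.inl hst)) ht htm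
  · exact isTopCorner_iterate_of_isStart_imp hS.neg hK hz
      (fun x hx hzx hst => hstart x hx hzx (.inr hst)) ht htm

theorem pathIntegral_arcProd_iterate {k : Type*} [CommRing k] (hx : W.next^[N] x = x) (t : ℕ) :
    pathIntegral k (W.arcProd (W.next^[t] x).2 N) (W.next^[t] x).1 =
      pathIntegral k (W.arcProd x.2 N) x.1 := by
  have := semiconjBy_iff_eq.1 (semiconjBy_arcHolonomy
    (fun e => Multiplicative.ofAdd (LinearMap.proj e : Module.Dual k (X × A → k))) hx t)
  exact congrArg Multiplicative.toAdd this

open Classical in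
theorem card_isStart_lt_card_orbits [MulAction.IsPretransitive (FreeGroup A) X]
    (hW : W.IsReduced) (hS : W.IsStacking h) (hK : ∀ x, W.next x ∈ K ↔ x ∈ K) (hne : K.Nonempty)
    (hN : 0 < N) (hKN : ∀ x ∈ K, W.next^[N] x = x)
    (hloop : W.BoundariesSpanLoops K ℚ N) :
    (K.filter (W.IsStart h K)).card <
      (K.image (Quotient.mk (Equiv.Perm.SameCycle.setoid W.next))).card := by
  let G := K.image fun x : X × ZMod ℓ => pathIntegral ℚ (W.arcProd x.2 N) x.1
  have hlt : _ < G.card :=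
    card_isStart_lt hW hS hK hne (by simpa [G, BoundariesSpanLoops] using hloop)
  refine hlt.trans_le ?_
  refine Finset.card_le_card_of_surjOn
    (fun O => pathIntegral ℚ (W.arcProd O.out.2 N) O.out.1) fun φ hφ => ?_
  obtain ⟨x, hx, rfl⟩ := Finset.mem_image.1 hφ
  obtain ⟨t, ht⟩ := exists_iterate_eq_of_sameCycle ⟨N, hN, hKN x hx⟩
    (Quotient.mk_out (s := Equiv.Perm.SameCycle.setoid W.next) x : W.next.SameCycle _ x).symm
  refine ⟨_, Finset.mem_coe.2 (Finset.mem_image_of_mem _ hx), ?_⟩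
  simp only [← ht, pathIntegral_arcProd_iterate (hKN x hx)]

/-- There are fewer starts than cells for `h` and for `-h`, so that together there are at most
`2 (c - 1)` of them on the `c` cells. -/
theorem exists_startsOnlyAt [MulAction.IsPretransitive (FreeGroup A) X]
    (hW : W.IsReduced) (hS : W.IsStacking h) (hK : ∀ x, W.next x ∈ K ↔ x ∈ K) (hne : K.Nonempty)
    (hN : 0 < N) (hKN : ∀ x ∈ K, W.next^[N] x = x)
    (hloop : W.BoundariesSpanLoops K ℚ N) :
    (∃ z ∈ K, ∀ x, W.next.SameCycle z x → W.StartsOnlyAt K h x) ∨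
      ∃ z ∈ K, ∃ z' ∈ K, ¬ W.next.SameCycle z z' ∧ W.StartsOnlyAt K h z ∧
        W.StartsOnlyAt K h z' := by
  classical
  have hlt := card_isStart_lt_card_orbits hW hS hK hne hN hKN hloop
  have hlt' := card_isStart_lt_card_orbits hW hS.neg hK hne hN hKN hloop
  have hle := Finset.card_union_le (K.filter (W.IsStart h K)) (K.filter (W.IsStart (-h) K))
  have hcases := exists_fiber_subsingleton_of_card_add_two_le (K := K)
    (Quotient.mk (Equiv.Perm.SameCycle.setoid W.next))
    (Finset.union_subset (K.filter_subset (W.IsStart h K)) (K.filter_subset (W.IsStart (-h) K)))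
    (by lia)
  have hmem (x) : x ∈ K.filter (W.IsStart h K) ∪ K.filter (W.IsStart (-h) K) ↔
      x ∈ K ∧ (W.IsStart h K x ∨ W.IsStart (-h) K x) := by
    rw [Finset.mem_union, Finset.mem_filter, Finset.mem_filter, and_or_left]
  have horbit (x z : X × ZMod ℓ) : (Quotient.mk (Equiv.Perm.SameCycle.setoid W.next) x =
      Quotient.mk (Equiv.Perm.SameCycle.setoid W.next) z) ↔ W.next.SameCycle z x :=
    Quotient.eq.trans Equiv.Perm.sameCycle_comm
  simp only [hmem, ne_eq, horbit, and_imp] at hcases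
  rcases hcases with ⟨z, hz, hnone⟩ | ⟨z, hz, z', hz', hne, hzU, hzU'⟩
  · exact .inl ⟨z, hz, fun x hzx y hy hxy hst => (hnone y hy hst (hzx.trans hxy)).elim⟩
  · exact .inr ⟨z, hz, z', hz', fun h => hne h.symm, fun x hx hzx hst => hzU x hx hst hzx,
      fun x hx hzx hst => hzU' x hx hst hzx⟩

theorem le_minimalPeriod_next (hN : 0 < N) (hx : W.next^[N] x = x) :
    ℓ ≤ Function.minimalPeriod W.next x :=
  Nat.le_of_dvd (Function.IsPeriodicPt.minimalPeriod_pos hN hx)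
    (W.dvd_of_next_iterate_eq (Function.iterate_minimalPeriod (f := W.next)))

theorem exists_isFree [NeZero ℓ] [MulAction.IsPretransitive (FreeGroup A) X]
    (hW : W.IsReduced) (hS : W.IsStacking h) (hK : ∀ x, W.next x ∈ K ↔ x ∈ K) (hne : K.Nonempty)
    (hN : 0 < N) (hKN : ∀ x ∈ K, W.next^[N] x = x)
    (hloop : W.BoundariesSpanLoops K ℚ N) :
    ∃ x ∈ K, W.IsFree K x := by
  obtain ⟨z, hz, hstart⟩ : ∃ z ∈ K, W.StartsOnlyAt K h z := by
    rcases exists_startsOnlyAt hW hS hK hne hN hKN hloop with ⟨z, hz, hs⟩ | ⟨z, hz, _, _, _, hs, _⟩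
    · exact ⟨z, hz, hs z .rfl⟩
    · exact ⟨z, hz, hs⟩
  have hℓ := le_minimalPeriod_next hN (hKN z hz)
  exact ⟨z, hz, isFree_of_isLone_next hW hK
    (hstart.isLone_iterate hS hK hz one_pos (by lia))⟩

/-- The vertex `v₀` is avoided by choosing between two cells, as it cannot be a lone corner of both.
If no second cell is available then some cell has no start at all, and its run may begin at `v₀`. -/
theorem exists_isLone_run [NeZero ℓ] [MulAction.IsPretransitive (FreeGroup A) X]
    (hW : W.IsReduced) (hS : W.IsStacking h) (hK : ∀ x, W.next x ∈ K ↔ x ∈ K) (hne : K.Nonempty)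
    (hN : 0 < N) (hKN : ∀ x ∈ K, Function.minimalPeriod W.next x = N)
    (hloop : W.BoundariesSpanLoops K ℚ N) (v₀ : X) :
    ∃ z ∈ K, (∀ t, 0 < t → t + ℓ ≤ N + 1 → IsLone K (W.next^[t] z)) ∧
      ∀ t, 0 < t → t + ℓ ≤ N → (W.next^[t] z).1 ≠ v₀ := by
  have hKN' (x) (hx : x ∈ K) : W.next^[N] x = x := hKN x hx ▸ Function.iterate_minimalPeriod
  have hlone {z} (hz : z ∈ K) (hs : W.StartsOnlyAt K h z) (t : ℕ) (ht : 0 < t)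
      (htN : t + ℓ ≤ N + 1) : IsLone K (W.next^[t] z) :=
    hs.isLone_iterate hS hK hz ht (by rwa [hKN z hz])
  have hmem {z} (hz : z ∈ K) (t : ℕ) : W.next^[t] z ∈ K := (next_iterate_mem hK t).2 hz
  have hℓN {z} (hz : z ∈ K) : ℓ ≤ N := hKN z hz ▸ le_minimalPeriod_next hN (hKN' z hz)
  rcases exists_startsOnlyAt hW hS hK hne hN hKN' hloop with ⟨z, hz, hs⟩ |
    ⟨z, hz, z', hz', hne, hs, hs'⟩
  · by_cases hv₀ : ∃ t, (W.next^[t] z).1 = v₀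
    · obtain ⟨s, rfl⟩ := hv₀
      have hcycle := W.sameCycle_next_iterate s z
      have hall (t : ℕ) : IsLone K (W.next^[t] (W.next^[s] z)) := by
        have hx := (hcycle.trans (W.sameCycle_next_iterate t _))
        have hpred := (Equiv.Perm.sameCycle_symm_apply_right).2 hx
        have hy : W.next.symm (W.next^[t] (W.next^[s] z)) ∈ K := by
          rw [← hK, Equiv.apply_symm_apply]
          exact hmem (hmem hz s) t
        have := hlone hy (hs _ hpred) 1 one_pos (by have := hℓN hz; lia)
        rwa [Function.iterate_one, Equiv.apply_symm_apply] at this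
      refine ⟨W.next^[s] z, hmem hz s, fun t _ _ => hall t, fun t ht htN heq => ht.ne' ?_⟩
      refine Function.IsPeriodicPt.eq_zero_of_lt_minimalPeriod (f := W.next) (x := W.next^[s] z)
        (hall 0 _ (hmem (hmem hz s) t) heq) ?_
      have := NeZero.pos ℓ
      rw [hKN _ (hmem hz s)]
      lia
    · exact ⟨z, hz, hlone hz (hs z .rfl), fun t _ _ ht => hv₀ ⟨t, ht⟩⟩
  · by_cases hv₀ : ∃ t, 0 < t ∧ t + ℓ ≤ N ∧ (W.next^[t] z).1 = v₀
    · obtain ⟨s, hs₀, hsN, rfl⟩ := hv₀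
      refine ⟨z', hz', hlone hz' hs', fun t _ _ ht => hne ?_⟩
      have heq := hlone hz hs s hs₀ (by lia) _ (hmem hz' t) ht
      exact (W.sameCycle_next_iterate s z).trans (heq ▸ (W.sameCycle_next_iterate t z').symm)
    · push Not at hv₀
      exact ⟨z, hz, hlone hz hs, hv₀⟩

end Runs

end CyclicWord

/-! ### Complexes of cells -/

section ConjClosure

variable {G : Type*} [Group G] {r g : G} {S T : Finset G}

/-- The subgroup generated by the conjugates of `r` by the elements of the finite set `S`. The size
of `S` is the number of cells needed to fill in the elements of this subgroup. -/
def conjClosure (r : G) (S : Finset G) : Subgroup G :=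
  Subgroup.closure ((fun s => s * r * s⁻¹) '' S)

theorem conj_mem_conjClosure {s : G} (hs : s ∈ S) : s * r * s⁻¹ ∈ conjClosure r S :=
  Subgroup.subset_closure ⟨s, hs, rfl⟩

theorem conjClosure_mono (h : S ⊆ T) : conjClosure r S ≤ conjClosure r T :=
  Subgroup.closure_mono (Set.image_mono h)

theorem nonempty_of_mem_conjClosure (hg : g ∈ conjClosure r S) (hne : g ≠ 1) : S.Nonempty := by
  rw [Finset.nonempty_iff_ne_empty]
  rintro rfl
  exact hne (by simpa [conjClosure] using hg)

theorem conj_mem_conjClosure_image [DecidableEq G] (t : G) (hg : g ∈ conjClosure r S) :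
    t * g * t⁻¹ ∈ conjClosure r (S.image (t * ·)) := by
  have hle : conjClosure r S ≤
      (conjClosure r (S.image (t * ·))).comap (MulAut.conj t).toMonoidHom := by
    refine (Subgroup.closure_le _).2 ?_
    rintro _ ⟨s, hs, rfl⟩
    have := conj_mem_conjClosure (r := r) (Finset.mem_image_of_mem (t * ·) hs)
    simpa [mul_assoc] using this
  exact hle hg

theorem exists_mem_conjClosure_of_mem_normalClosure (hg : g ∈ Subgroup.normalClosure {r}) :
    ∃ S, g ∈ conjClosure r S := by
  classical
  induction hg using Subgroup.closure_induction with
  | mem x hx =>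
    obtain ⟨_, rfl, hconj⟩ := Group.mem_conjugatesOfSet_iff.1 hx
    obtain ⟨s, rfl⟩ := isConj_iff.1 hconj
    exact ⟨{s}, conj_mem_conjClosure (Finset.mem_singleton_self s)⟩
  | one => exact ⟨∅, one_mem _⟩
  | mul x y _ _ ihx ihy =>
    obtain ⟨S, hS⟩ := ihx
    obtain ⟨T, hT⟩ := ihy
    exact ⟨S ∪ T, mul_mem (conjClosure_mono Finset.subset_union_left hS)
      (conjClosure_mono Finset.subset_union_right hT)⟩
  | inv x _ ih => exact ih.imp fun S hS => inv_mem hS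

end ConjClosure

theorem exists_holonomy_cons_eq {A X M : Type*} [MulAction (FreeGroup A) X] [Group M]
    (f₀ : X × A → M) (c : M) {v : X} {p : A × Bool} {L : List (A × Bool)}
    (hL : letterEdge v p ∉ pathEdges ((letterElt p)⁻¹ • v) L) :
    ∃ f : X × A → M, (∀ e ≠ letterEdge v p, f e = f₀ e) ∧
      holonomy f (FreeGroup.mk (p :: L)) v = c := by
  classical
  let b := c * (holonomy f₀ (FreeGroup.mk L) ((letterElt p)⁻¹ • v))⁻¹
  have hoff (a : M) (e) (he : e ≠ letterEdge v p) :
      Function.update f₀ (letterEdge v p) a e = f₀ e := Function.update_of_ne he _ _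
  refine ⟨_, hoff (if p.2 then b else b⁻¹), ?_⟩
  rw [mk_cons_eq_letterElt_mul, holonomy_mul, holonomy_letterElt, Function.update_self,
    holonomy_congr fun e he => hoff _ e fun h => hL (h ▸ he)]
  split_ifs <;> simp [b]

namespace CyclicWord

section FreeSides

variable {A X M : Type*} [MulAction (FreeGroup A) X] [Group M] {ℓ : ℕ} {W : CyclicWord A ℓ}
  {K : Finset (X × ZMod ℓ)} {N : ℕ} {x y : X × ZMod ℓ}

theorem IsFree.exists_iterate_eq (hx : W.IsFree K x) (hK : ∀ x, W.next x ∈ K ↔ x ∈ K) (hy : y ∈ K)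
    {t : ℕ} (hmem : W.side x ∈ pathEdges y.1 (W.arc y.2 t)) : ∃ s < t, W.next^[s] y = x := by
  rw [pathEdges_arc] at hmem
  obtain ⟨s, hs, heq⟩ := List.mem_map.1 hmem
  exact ⟨s, List.mem_range.1 hs, hx _ ((next_iterate_mem hK s).2 hy) heq⟩

theorem IsFree.arcHolonomy_congr (hx : W.IsFree K x) (hK : ∀ x, W.next x ∈ K ↔ x ∈ K) (hy : y ∈ K)
    (hxy : ¬ W.next.SameCycle y x) {f f₀ : X × A → M} (hf : ∀ e ≠ W.side x, f e = f₀ e) (t : ℕ) :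
    W.arcHolonomy f t y = W.arcHolonomy f₀ t y := by
  refine holonomy_congr fun e he => hf e ?_
  rintro rfl
  obtain ⟨s, -, rfl⟩ := hx.exists_iterate_eq hK hy he
  exact hxy (W.sameCycle_next_iterate s y)

theorem IsFree.exists_arcHolonomy_eq (hx : W.IsFree K x) (hK : ∀ x, W.next x ∈ K ↔ x ∈ K)
    (hxK : x ∈ K) (hN : 0 < N) (hxN : W.next^[N] x = x) (f₀ : X × A → M) (c : M)
    (hc : c ^ (N / Function.minimalPeriod W.next x) = 1) :
    ∃ f : X × A → M, (∀ e ≠ W.side x, f e = f₀ e) ∧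
      W.arcHolonomy f (Function.minimalPeriod W.next x) x = c ∧
      ∀ y, W.next.SameCycle x y → W.arcHolonomy f N y = 1 := by
  obtain ⟨m, hm⟩ : ∃ m, Function.minimalPeriod W.next x = 1 + m :=
    Nat.exists_eq_add_of_le (Function.IsPeriodicPt.minimalPeriod_pos hN hxN)
  have havoid : letterEdge x.1 (W x.2) ∉
      pathEdges ((letterElt (W x.2))⁻¹ • x.1) (W.arc (x.2 + 1) m) := by
    intro hmem
    obtain ⟨s, hs, heq⟩ := hx.exists_iterate_eq hK ((hK x).2 hxK) hmem
    have := Function.IsPeriodicPt.eq_zero_of_lt_minimalPeriod (n := s + 1) heq (by lia)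
    lia
  obtain ⟨f, hf, hfc⟩ := exists_holonomy_cons_eq f₀ c havoid
  have hloop : W.arcHolonomy f (Function.minimalPeriod W.next x) x = c := by
    rw [hm, arcHolonomy, arcProd, arc_add]
    simpa using hfc
  have hboundary : W.arcHolonomy f N x = 1 := by
    rw [← Nat.mul_div_cancel' (Function.IsPeriodicPt.minimalPeriod_dvd hxN),
      arcHolonomy_mul f Function.iterate_minimalPeriod, hloop, hc]
  refine ⟨f, hf, hloop, fun y hxy => ?_⟩
  obtain ⟨t, rfl⟩ := exists_iterate_eq_of_sameCycle ⟨N, hN, hxN⟩ hxy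
  have := semiconjBy_arcHolonomy f hxN t
  rw [hboundary] at this
  exact (mul_eq_left (a := W.arcHolonomy f t x)).1 (this.eq.trans (one_mul _))

end FreeSides

section Complex

variable {A X : Type*} [MulAction (FreeGroup A) X] {ℓ : ℕ} (W : CyclicWord A ℓ) (N : ℕ)
  (S : Finset (FreeGroup A)) (v₀ : X)

open Classical in
/-- The corners of the cells attached to the Schreier graph on `X` along the loops of length `N`
that read `W` from the vertices `s⁻¹ • v₀` with `s ∈ S`. -/
noncomputable def cellCorners : Finset (X × ZMod ℓ) :=
  Finset.image₂ (fun s t => W.next^[t] (s⁻¹ • v₀, 0)) S (Finset.range N)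

variable {W N S v₀}

theorem next_iterate_of_mem_conjugators (hℓN : ℓ ∣ N)
    (hst : MulAction.stabilizer (FreeGroup A) v₀ = conjClosure (W.arcProd 0 N) S)
    {s : FreeGroup A} (hs : s ∈ S) : W.next^[N] (s⁻¹ • v₀, 0) = (s⁻¹ • v₀, 0) := by
  have hfix : s * W.arcProd 0 N * s⁻¹ ∈ MulAction.stabilizer (FreeGroup A) v₀ :=
    hst ▸ conj_mem_conjClosure hs
  rw [MulAction.mem_stabilizer_iff, mul_smul, mul_smul, smul_eq_iff_eq_inv_smul] at hfix
  simp only [next_iterate_apply, zero_add, (ZMod.natCast_eq_zero_iff N ℓ).2 hℓN, Prod.mk.injEq,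
    and_true, inv_smul_eq_iff, hfix]

theorem mem_cellCorners (hN : 0 < N) (hℓN : ℓ ∣ N)
    (hst : MulAction.stabilizer (FreeGroup A) v₀ = conjClosure (W.arcProd 0 N) S)
    {x : X × ZMod ℓ} : x ∈ W.cellCorners N S v₀ ↔ ∃ s ∈ S, W.next.SameCycle (s⁻¹ • v₀, 0) x := by
  simp only [cellCorners, Finset.mem_image₂, Finset.mem_range]
  refine exists_congr fun s => and_congr_right fun hs => ⟨?_, fun hx => ?_⟩
  · rintro ⟨t, -, rfl⟩
    exact W.sameCycle_next_iterate t _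
  · have hper : W.next^[N] (s⁻¹ • v₀, 0) = (s⁻¹ • v₀, 0) :=
      next_iterate_of_mem_conjugators hℓN hst hs
    obtain ⟨t, rfl⟩ := exists_iterate_eq_of_sameCycle ⟨N, hN, hper⟩ hx
    exact ⟨t % N, t.mod_lt hN, Function.IsPeriodicPt.iterate_mod_apply hper t⟩

theorem next_mem_cellCorners (hN : 0 < N) (hℓN : ℓ ∣ N)
    (hst : MulAction.stabilizer (FreeGroup A) v₀ = conjClosure (W.arcProd 0 N) S)
    (x : X × ZMod ℓ) : W.next x ∈ W.cellCorners N S v₀ ↔ x ∈ W.cellCorners N S v₀ := by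
  simp only [mem_cellCorners hN hℓN hst, Equiv.Perm.sameCycle_apply_right]

theorem next_iterate_eq_of_mem_cellCorners (hN : 0 < N) (hℓN : ℓ ∣ N)
    (hst : MulAction.stabilizer (FreeGroup A) v₀ = conjClosure (W.arcProd 0 N) S)
    {x : X × ZMod ℓ} (hx : x ∈ W.cellCorners N S v₀) : W.next^[N] x = x := by
  obtain ⟨s, hs, i, rfl⟩ := (mem_cellCorners hN hℓN hst).1 hx
  have hper := next_iterate_of_mem_conjugators hℓN hst hs
  rw [Equiv.Perm.iterate_eq_pow] at hper ⊢
  rw [← Equiv.Perm.mul_apply, (Commute.refl W.next).pow_left N |>.zpow_right i |>.eq,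
    Equiv.Perm.mul_apply, hper]

theorem boundariesSpanLoops_cellCorners [MulAction.IsPretransitive (FreeGroup A) X] (hN : 0 < N)
    (hℓN : ℓ ∣ N) (hst : MulAction.stabilizer (FreeGroup A) v₀ = conjClosure (W.arcProd 0 N) S)
    (k : Type*) [CommRing k] : W.BoundariesSpanLoops (W.cellCorners N S v₀) k N := by
  intro g v hg
  refine pathIntegral_mem_of_stabilizer_eq_closure k hst ?_ hg
  rintro _ ⟨s, hs, rfl⟩
  have hfix := congrArg Prod.fst (next_iterate_of_mem_conjugators hℓN hst hs)
  rw [next_iterate_apply, inv_smul_eq_iff] at hfix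
  rw [pathIntegral_conj k s hfix.symm]
  exact Submodule.subset_span ⟨(s⁻¹ • v₀, 0), (mem_cellCorners hN hℓN hst).2 ⟨s, hs, .rfl⟩, rfl⟩

theorem holonomy_conj_mem {M : Type*} [Group M]
    (hst : MulAction.stabilizer (FreeGroup A) v₀ = conjClosure (W.arcProd 0 N) S) (hℓN : ℓ ∣ N)
    {f : X × A → M} {T : Subgroup M}
    (hT : ∀ s ∈ S, holonomy f s v₀ * W.arcHolonomy f N (s⁻¹ • v₀, 0) * (holonomy f s v₀)⁻¹ ∈ T)
    {g h : FreeGroup A} (hgv : g • h⁻¹ • v₀ = h⁻¹ • v₀) :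
    holonomy f h v₀ * holonomy f g (h⁻¹ • v₀) * (holonomy f h v₀)⁻¹ ∈ T := by
  refine holonomy_conj_mem_of_stabilizer_eq_closure hst ?_ hgv
  rintro _ ⟨s, hs, rfl⟩
  have hfix := congrArg Prod.fst (next_iterate_of_mem_conjugators hℓN hst hs)
  rw [next_iterate_apply, inv_smul_eq_iff] at hfix
  rw [holonomy_conj s hfix.symm]
  exact hT s hs

/-- A cell with a free side is not a proper power: otherwise the shorter loop around it would have
nontrivial holonomy in `ZMod q`, whereas `q`-th powers of loops have none. -/
theorem IsFree.minimalPeriod_eq [MulAction.IsPretransitive (FreeGroup A) X] (hN : 0 < N)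
    (hℓN : ℓ ∣ N) (hst : MulAction.stabilizer (FreeGroup A) v₀ = conjClosure (W.arcProd 0 N) S)
    {x : X × ZMod ℓ} (hxK : x ∈ W.cellCorners N S v₀) (hx : W.IsFree (W.cellCorners N S v₀) x) :
    Function.minimalPeriod W.next x = N := by
  have hK := next_mem_cellCorners hN hℓN hst
  have hxN := next_iterate_eq_of_mem_cellCorners hN hℓN hst hxK
  let q := N / Function.minimalPeriod W.next x
  let φ : FreeGroup A →* Multiplicative (ZMod q) := 1
  obtain ⟨f, hf, hloop, hcycle⟩ := hx.exists_arcHolonomy_eq hK hxK hN hxN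
    (fun e => φ (FreeGroup.of e.2)) (Multiplicative.ofAdd (1 : ZMod q)) (by simp [← ofAdd_nsmul, q])
  have hboundary (s) (hs : s ∈ S) : W.arcHolonomy f N (s⁻¹ • v₀, 0) = 1 := by
    by_cases hxs : W.next.SameCycle (s⁻¹ • v₀, 0) x
    · exact hcycle _ hxs.symm
    · rw [hx.arcHolonomy_congr hK ((mem_cellCorners hN hℓN hst).2 ⟨s, hs, .rfl⟩) hxs hf]
      exact holonomy_comp_of _ _ φ
  obtain ⟨y, hy⟩ := MulAction.exists_smul_eq (FreeGroup A) x.1 v₀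
  have hyx : x.1 = y⁻¹ • v₀ := eq_inv_smul_iff.2 hy
  have hclosed := Function.iterate_minimalPeriod (f := W.next) (x := x)
  rw [next_iterate_apply, Prod.ext_iff] at hclosed
  have htriv := holonomy_conj_mem hst hℓN (f := f) (T := ⊥) (fun s hs => by simp [hboundary s hs])
    (hyx ▸ (inv_smul_eq_iff.1 hclosed.1).symm)
  rw [← hyx, Subgroup.mem_bot, conj_eq_one_iff] at htriv
  have hq : ((1 : ℕ) : ZMod q) = 0 := Nat.cast_one.trans (hloop.symm.trans htriv)
  rw [ZMod.natCast_eq_zero_iff, Nat.dvd_one] at hq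
  exact Nat.eq_of_dvd_of_div_eq_one (Function.IsPeriodicPt.minimalPeriod_dvd hxN) hq

theorem IsFree.exists_mem_conjClosure [MulAction.IsPretransitive (FreeGroup A) X] (hN : 0 < N)
    (hℓN : ℓ ∣ N) (hst : MulAction.stabilizer (FreeGroup A) v₀ = conjClosure (W.arcProd 0 N) S)
    {x : X × ZMod ℓ} (hxK : x ∈ W.cellCorners N S v₀) (hx : W.IsFree (W.cellCorners N S v₀) x)
    {v : X} {L : List (A × Bool)} (hL : W.side x ∉ pathEdges v L) (hv : FreeGroup.mk L • v = v) :
    ∃ T : Finset (FreeGroup A), T.card < S.card ∧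
      FreeGroup.mk L ∈ conjClosure (W.arcProd 0 N) T := by
  classical
  have hK := next_mem_cellCorners hN hℓN hst
  have hxN := next_iterate_eq_of_mem_cellCorners hN hℓN hst hxK
  let φ := MonoidHom.id (FreeGroup A)
  obtain ⟨f, hf, -, hcycle⟩ := hx.exists_arcHolonomy_eq hK hxK hN hxN
    (fun e => φ (FreeGroup.of e.2)) 1 (one_pow _)
  let S' := S.filter fun s => ¬ W.next.SameCycle (s⁻¹ • v₀, 0) x
  have hS' : S'.card < S.card := by
    obtain ⟨s, hs, hsx⟩ := (mem_cellCorners hN hℓN hst).1 hxK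
    exact Finset.card_lt_card (Finset.filter_ssubset.2 ⟨s, hs, not_not.2 hsx⟩)
  obtain ⟨y, rfl⟩ : ∃ y : FreeGroup A, y⁻¹ • v₀ = v :=
    (MulAction.exists_smul_eq (FreeGroup A) v v₀).imp fun y hy => inv_smul_eq_iff.2 hy.symm
  have hmem := holonomy_conj_mem hst hℓN (f := f) (h := y)
    (T := conjClosure (W.arcProd 0 N) (S'.image fun s => holonomy f s v₀)) (fun s hs => by
      by_cases hxs : W.next.SameCycle (s⁻¹ • v₀, 0) x
      · simp [hcycle _ hxs.symm]
      · rw [hx.arcHolonomy_congr hK ((mem_cellCorners hN hℓN hst).2 ⟨s, hs, .rfl⟩) hxs hf,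
          arcHolonomy, holonomy_comp_of _ _ φ]
        exact conj_mem_conjClosure
          (Finset.mem_image_of_mem _ (Finset.mem_filter.2 ⟨hs, hxs⟩))) hv
  rw [holonomy_congr fun e he => hf e fun h => hL (h ▸ he),
    holonomy_comp_of _ _ φ] at hmem
  have := conj_mem_conjClosure_image (holonomy f y v₀)⁻¹ hmem
  refine ⟨(S'.image fun s => holonomy f s v₀).image ((holonomy f y v₀)⁻¹ * ·),
    (Finset.card_image_le.trans Finset.card_image_le).trans_lt hS', ?_⟩
  simpa [mul_assoc, φ] using this

end Complex

end CyclicWord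

/-! ### Paths around the free sides -/

section Words

variable {A X : Type*} [MulAction (FreeGroup A) X] {v : X} {L L' : List (A × Bool)}

theorem exists_eq_append_cons_of_mem_pathEdges {e : X × A} (he : e ∈ pathEdges v L) :
    ∃ Q p Q', L = Q ++ p :: Q' ∧ letterEdge ((FreeGroup.mk Q)⁻¹ • v) p = e := by
  induction L generalizing v with
  | nil => exact absurd he List.not_mem_nil
  | cons p L ih =>
    rcases List.mem_cons.1 he with rfl | he
    · exact ⟨[], p, L, rfl, by simp [← FreeGroup.one_eq_mk]⟩
    · obtain ⟨Q, p', Q', rfl, rfl⟩ := ih he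
      exact ⟨p :: Q, p', Q', rfl, by rw [mk_cons_eq_letterElt_mul, mul_inv_rev, mul_smul]⟩

omit [MulAction (FreeGroup A) X] in
theorem toWord_mk_of_infix_toWord [DecidableEq A] {w : FreeGroup A} (hL : L <:+: w.toWord) :
    (FreeGroup.mk L).toWord = L :=
  FreeGroup.toWord_mk.trans (FreeGroup.isReduced_toWord.infix hL).reduce_eq

theorem invRev_infix_invRev (h : L <:+: L') : FreeGroup.invRev L <:+: FreeGroup.invRev L' :=
  List.reverse_infix.2 (h.map _)

/-- The path reading `L` from `v` does not visit a vertex other than `v` twice. -/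
def IsSimplePath (v : X) (L : List (A × Bool)) : Prop :=
  ∀ ⦃L₁ L₂⦄, L₁ <+: L → L₂ <+: L → (FreeGroup.mk L₁)⁻¹ • v = (FreeGroup.mk L₂)⁻¹ • v →
    (FreeGroup.mk L₁)⁻¹ • v ≠ v → L₁ = L₂

end Words

namespace CyclicWord

section Arcs

variable {A X : Type*} [DecidableEq A] [MulAction (FreeGroup A) X] {ℓ : ℕ} {W : CyclicWord A ℓ}
  {N m : ℕ} {S : Finset (FreeGroup A)} {v₀ : X} {g w : FreeGroup A}

omit [DecidableEq A] in
theorem isReduced_arc (hW : W.IsReduced) (i : ZMod ℓ) (t : ℕ) :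
    FreeGroup.IsReduced (W.arc i t) := by
  refine List.isChain_iff_getElem.2 fun j hj => ?_
  simp only [arc, List.getElem_map, List.getElem_range, Nat.cast_succ, ← add_assoc]
  intro hfst
  by_contra hsnd
  exact hW (i + j) (Prod.ext hfst.symm (Bool.eq_not.2 (Ne.symm hsnd)))

theorem toWord_arcProd (hW : W.IsReduced) (i : ZMod ℓ) (t : ℕ) :
    (W.arcProd i t).toWord = W.arc i t :=
  FreeGroup.toWord_mk.trans (isReduced_arc hW i t).reduce_eq

variable (W) in
/-- The reduced word of `w` contains an arc of length `m` of `W` or the inverse of such an arc. -/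
def ContainsArc (m : ℕ) (w : FreeGroup A) : Prop :=
  ∃ i, W.arc i m <:+: w.toWord ∨ FreeGroup.invRev (W.arc i m) <:+: w.toWord

theorem ContainsArc.of_infix (hg : W.ContainsArc m g) (h : g.toWord <:+: w.toWord) :
    W.ContainsArc m w :=
  hg.imp fun _ hi => hi.imp (·.trans h) (·.trans h)

theorem ContainsArc.of_inv (hw : W.ContainsArc m w⁻¹) : W.ContainsArc m w := by
  rw [ContainsArc, FreeGroup.toWord_inv] at hw
  refine hw.imp fun i hi => hi.symm.imp (fun h => ?_) fun h => ?_
  · simpa only [FreeGroup.invRev_invRev] using invRev_infix_invRev h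
  · simpa only [FreeGroup.invRev_invRev] using invRev_infix_invRev h

theorem ContainsArc.le_norm (hw : W.ContainsArc m w) : m ≤ w.norm := by
  obtain ⟨i, h | h⟩ := hw <;> simpa [FreeGroup.norm] using h.length_le

variable (W) in
/-- The assertion of the spelling theorem for an element `g` filled in by the cells indexed by `T`,
for relators of length `N` that run around the cyclic word `W`. -/
def HasSpelling (N : ℕ) (T : Finset (FreeGroup A)) (g : FreeGroup A) : Prop :=
  g ∈ conjClosure (W.arcProd 0 N) T → g ≠ 1 → W.ContainsArc (N - ℓ + 1) g

theorem minimalPeriod_eq_of_mem_cellCorners [MulAction.IsPretransitive (FreeGroup A) X]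
    (hW : W.IsReduced) (hN : 0 < N) (hℓN : ℓ ∣ N)
    (hst : MulAction.stabilizer (FreeGroup A) v₀ = conjClosure (W.arcProd 0 N) S)
    (ih : ∀ T g, T.card < S.card → W.HasSpelling N T g) {x y : X × ZMod ℓ}
    (hxK : x ∈ W.cellCorners N S v₀) (hx : W.IsFree (W.cellCorners N S v₀) x)
    (hyK : y ∈ W.cellCorners N S v₀) : Function.minimalPeriod W.next y = N := by
  have hyN := next_iterate_eq_of_mem_cellCorners hN hℓN hst hyK
  by_cases hxy : W.next.SameCycle y x
  · obtain ⟨t, rfl⟩ := exists_iterate_eq_of_sameCycle ⟨N, hN, hyN⟩ hxy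
    rw [← Function.minimalPeriod_apply_iterate ⟨N, hN, hyN⟩ t]
    exact hx.minimalPeriod_eq hN hℓN hst hxK
  have hclosed := Function.iterate_minimalPeriod (f := W.next) (x := y)
  have hpos := Function.IsPeriodicPt.minimalPeriod_pos hN hyN
  obtain ⟨q, hq⟩ := Function.IsPeriodicPt.minimalPeriod_dvd hyN
  have hℓ := Nat.le_of_dvd hpos (W.dvd_of_next_iterate_eq hclosed)
  generalize Function.minimalPeriod W.next y = p at *
  have hside : W.side x ∉ pathEdges y.1 (W.arc y.2 p) := fun hmem =>
    let ⟨t, _, ht⟩ := hx.exists_iterate_eq (next_mem_cellCorners hN hℓN hst) hyK hmem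
    hxy (ht ▸ W.sameCycle_next_iterate t y)
  rw [next_iterate_apply, Prod.ext_iff, inv_smul_eq_iff] at hclosed
  obtain ⟨T, hT, hmem⟩ := hx.exists_mem_conjClosure hN hℓN hst hxK hside hclosed.1.symm
  have hnorm : (W.arcProd y.2 p).norm = p := by rw [FreeGroup.norm, toWord_arcProd hW, length_arc]
  have hne : W.arcProd y.2 p ≠ 1 := fun h =>
    hpos.ne' (hnorm.symm.trans (FreeGroup.norm_eq_zero.2 h))
  have hle : N - ℓ + 1 ≤ p := hnorm ▸ (ih T _ hT hmem hne).le_norm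
  by_contra hpN
  have hq2 : 2 ≤ q := by
    by_contra!
    interval_cases q <;> lia
  have := Nat.mul_le_mul_left p hq2
  lia

theorem IsFree.side_mem_pathEdges [MulAction.IsPretransitive (FreeGroup A) X]
    (hN : 0 < N) (hℓN : ℓ ∣ N)
    (hst : MulAction.stabilizer (FreeGroup A) v₀ = conjClosure (W.arcProd 0 N) S)
    (ih : ∀ T g, T.card < S.card → W.HasSpelling N T g) {x : X × ZMod ℓ}
    (hxK : x ∈ W.cellCorners N S v₀) (hx : W.IsFree (W.cellCorners N S v₀) x)
    (hw : w ∈ conjClosure (W.arcProd 0 N) S) (hne : w ≠ 1)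
    (hcon : ¬ W.ContainsArc (N - ℓ + 1) w) : W.side x ∈ pathEdges v₀ w.toWord := by
  by_contra hside
  rw [← hst, MulAction.mem_stabilizer_iff, ← FreeGroup.mk_toWord (x := w)] at hw
  obtain ⟨T, hT, hmem⟩ := hx.exists_mem_conjClosure hN hℓN hst hxK hside hw
  rw [FreeGroup.mk_toWord] at hmem
  exact hcon (ih T w hT hmem hne)

theorem isSimplePath_toWord
    (hst : MulAction.stabilizer (FreeGroup A) v₀ = conjClosure (W.arcProd 0 N) S)
    (ih : ∀ T g, T.card ≤ S.card → g.norm < w.norm → W.HasSpelling N T g)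
    (hcon : ¬ W.ContainsArc (N - ℓ + 1) w) : IsSimplePath v₀ w.toWord := by
  intro L₁ L₂ h₁ h₂ hv hne
  wlog hle : L₁ <+: L₂ generalizing L₁ L₂
  · exact (this h₂ h₁ hv.symm (hv ▸ hne)
      ((List.prefix_or_prefix_of_prefix h₁ h₂).resolve_left hle)).symm
  obtain ⟨l, rfl⟩ := hle
  by_contra hl
  have hinfix : l <:+: w.toWord := (List.suffix_append L₁ l).isInfix.trans h₂.isInfix
  have hword := toWord_mk_of_infix_toWord hinfix
  have hnorm : (FreeGroup.mk l).norm < w.norm := by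
    have hL₁ : L₁ ≠ [] := by
      rintro rfl
      exact hne (by rw [← FreeGroup.one_eq_mk, inv_one, one_smul])
    have hlen := h₂.length_le
    rw [List.length_append] at hlen
    rw [FreeGroup.norm, FreeGroup.norm, hword]
    have := List.length_pos_iff.2 hL₁
    lia
  have hmem : FreeGroup.mk L₁ * FreeGroup.mk l * (FreeGroup.mk L₁)⁻¹ ∈
      conjClosure (W.arcProd 0 N) S := by
    rw [← hst, MulAction.mem_stabilizer_iff, mul_smul, hv, FreeGroup.mul_mk, smul_inv_smul]
  have hmem' := conj_mem_conjClosure_image (FreeGroup.mk L₁)⁻¹ hmem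
  rw [inv_inv, mul_assoc, inv_mul_cancel_right, inv_mul_cancel_left] at hmem'
  have hl1 : FreeGroup.mk l ≠ 1 := by
    intro h
    rw [h, FreeGroup.toWord_one] at hword
    exact hl (by rw [← hword, List.append_nil])
  exact hcon ((ih _ _ Finset.card_image_le hnorm hmem' hl1).of_infix (hword.symm ▸ hinfix))

omit [DecidableEq A] in
theorem append_arc_prefix (hW : W.IsReduced) {L L₁ : List (A × Bool)} (hL : IsSimplePath v₀ L)
    {z : X × ZMod ℓ} (hz : (FreeGroup.mk L₁)⁻¹ • v₀ = z.1) (hL₁ : L₁ ++ [W z.2] <+: L) {t : ℕ}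
    (hv₀ : ∀ s, 0 < s → s ≤ t → (W.next^[s] z).1 ≠ v₀)
    (hside : ∀ s, 0 < s → s ≤ t → W.side (W.next^[s] z) ∈ pathEdges v₀ L) :
    L₁ ++ W.arc z.2 (t + 1) <+: L := by
  induction t with
  | zero => simpa using hL₁
  | succ t ih =>
    have hprefix := ih (fun s hs hst => hv₀ s hs (by lia)) fun s hs hst => hside s hs (by lia)
    have hv : (FreeGroup.mk (L₁ ++ W.arc z.2 (t + 1)))⁻¹ • v₀ = (W.next^[t + 1] z).1 := by
      rw [← FreeGroup.mul_mk, mul_inv_rev, mul_smul, hz, next_iterate_apply, arcProd]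
    have hne := hv₀ (t + 1) t.succ_pos le_rfl
    obtain ⟨Q, p, Q', rfl, hp⟩ :=
      exists_eq_append_cons_of_mem_pathEdges (hside (t + 1) t.succ_pos le_rfl)
    have hQ : Q ++ [p] <+: Q ++ p :: Q' := ⟨Q', by simp⟩
    rw [arc_add, ← List.append_assoc, arc_one]
    rw [side, letterEdge_eq_iff] at hp
    rw [next_iterate_apply] at hp hv hne
    rcases hp with ⟨hvQ, rfl⟩ | ⟨hp, hvQ⟩
    · have := hL hprefix (List.prefix_append Q _) (hv.trans hvQ.symm) (hv ▸ hne)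
      exact this ▸ hQ
    · rw [← mul_smul, ← mul_inv_rev, letterElt, FreeGroup.mul_mk] at hvQ
      have := hL hprefix hQ (hv.trans hvQ) (hv ▸ hne)
      rw [arc_add, arc_one, ← List.append_assoc] at this
      obtain ⟨-, hlast⟩ := List.append_inj' this rfl
      refine absurd ?_ (hW (z.2 + t))
      rw [List.singleton_injective hlast, ← hp, Nat.cast_succ, add_assoc]

theorem containsArc_of_isLone_run [MulAction.IsPretransitive (FreeGroup A) X]
    (hW : W.IsReduced) (hN : 0 < N) (hℓN : ℓ ∣ N)
    (hst : MulAction.stabilizer (FreeGroup A) v₀ = conjClosure (W.arcProd 0 N) S)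
    (ih_card : ∀ T g, T.card < S.card → W.HasSpelling N T g)
    (ih_norm : ∀ T g, T.card ≤ S.card → g.norm < w.norm → W.HasSpelling N T g)
    {z : X × ZMod ℓ} (hzK : z ∈ W.cellCorners N S v₀)
    (hlone : ∀ t, 0 < t → t + ℓ ≤ N + 1 → IsLone (W.cellCorners N S v₀) (W.next^[t] z))
    (hv₀ : ∀ t, 0 < t → t + ℓ ≤ N → (W.next^[t] z).1 ≠ v₀)
    (hw : w ∈ conjClosure (W.arcProd 0 N) S) (hne : w ≠ 1) {L₁ : List (A × Bool)}
    (hz : (FreeGroup.mk L₁)⁻¹ • v₀ = z.1) (hL₁ : L₁ ++ [W z.2] <+: w.toWord) :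
    W.ContainsArc (N - ℓ + 1) w := by
  by_contra hcon
  have hℓ := Nat.le_of_dvd hN hℓN
  have hK := next_mem_cellCorners hN hℓN hst
  have hside (t : ℕ) (ht : t ≤ N - ℓ) : W.side (W.next^[t] z) ∈ pathEdges v₀ w.toWord := by
    refine IsFree.side_mem_pathEdges hN hℓN hst ih_card ((next_iterate_mem hK t).2 hzK)
      (isFree_of_isLone_next hW hK ?_) hw hne hcon
    rw [← Function.iterate_succ_apply' W.next]
    exact hlone _ t.succ_pos (by lia)
  have hprefix := append_arc_prefix hW (isSimplePath_toWord hst ih_norm hcon) hz hL₁ (t := N - ℓ)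
    (fun t ht htN => hv₀ t ht (by lia)) fun t _ htN => hside t htN
  exact hcon ⟨z.2, .inl ((List.suffix_append L₁ _).isInfix.trans hprefix.isInfix)⟩

/-- The run of lone corners found by the stacking is covered by the path reading `w`, because the
cells could be removed if `w` avoided one of its free sides. The path is simple, so it follows the
run all the way once it has entered it, forwards for `w` or for `w⁻¹`. -/
theorem HasSpelling.of_forall_lt [NeZero ℓ] [MulAction.IsPretransitive (FreeGroup A) X]
    (hW : W.IsReduced) (hprim : W.IsPrimitive) (hN : 0 < N) (hℓN : ℓ ∣ N)
    (hst : MulAction.stabilizer (FreeGroup A) v₀ = conjClosure (W.arcProd 0 N) S)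
    (ih_card : ∀ T g, T.card < S.card → W.HasSpelling N T g)
    (ih_norm : ∀ T g, T.card ≤ S.card → g.norm < w.norm → W.HasSpelling N T g) :
    W.HasSpelling N S w := by
  intro hw hne
  by_contra hcon
  obtain ⟨h, hS⟩ := exists_isStacking hW hprim
  have hK := next_mem_cellCorners hN hℓN hst
  have hloop := boundariesSpanLoops_cellCorners hN hℓN hst ℚ
  have hKne : (W.cellCorners N S v₀).Nonempty :=
    let ⟨s, hs⟩ := nonempty_of_mem_conjClosure hw hne
    ⟨_, (mem_cellCorners hN hℓN hst).2 ⟨s, hs, .rfl⟩⟩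
  obtain ⟨x, hxK, hx⟩ := exists_isFree hW hS hK hKne hN
    (fun x => next_iterate_eq_of_mem_cellCorners hN hℓN hst) hloop
  obtain ⟨z, hzK, hlone, hv₀⟩ := exists_isLone_run hW hS hK hKne hN
    (fun y => minimalPeriod_eq_of_mem_cellCorners hW hN hℓN hst ih_card hxK hx) hloop v₀
  have hfree : W.IsFree (W.cellCorners N S v₀) z :=
    isFree_of_isLone_next hW hK (hlone 1 one_pos (by have := Nat.le_of_dvd hN hℓN; lia))
  obtain ⟨Q, p, Q', hQ, hp⟩ := exists_eq_append_cons_of_mem_pathEdges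
    (hfree.side_mem_pathEdges hN hℓN hst ih_card hzK hw hne hcon)
  rcases letterEdge_eq_iff.1 hp with ⟨hz, rfl⟩ | ⟨hp, hz⟩
  · refine hcon (containsArc_of_isLone_run hW hN hℓN hst ih_card ih_norm hzK hlone hv₀ hw hne hz ?_)
    exact ⟨Q', by simp [hQ]⟩
  · refine hcon (ContainsArc.of_inv (containsArc_of_isLone_run hW hN hℓN hst ih_card ?_ hzK hlone
      hv₀ (inv_mem hw) (inv_ne_one.2 hne) (L₁ := FreeGroup.invRev Q') ?_ ?_))
    · simpa only [FreeGroup.norm_inv_eq] using ih_norm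
    · have hfix : w • v₀ = v₀ := MulAction.mem_stabilizer_iff.1 (hst ▸ hw)
      rw [← FreeGroup.mk_toWord (x := w), hQ, ← FreeGroup.mul_mk, mk_cons_eq_letterElt_mul] at hfix
      rw [hz, ← FreeGroup.inv_mk, inv_inv, eq_inv_smul_iff, eq_inv_smul_iff, ← mul_smul, ← mul_smul,
        mul_assoc, hfix]
    · exact ⟨FreeGroup.invRev Q, by
        simp [FreeGroup.toWord_inv, hQ, hp, letterInv, FreeGroup.invRev]⟩

theorem hasSpelling [NeZero ℓ] (hW : W.IsReduced) (hprim : W.IsPrimitive) (hN : 0 < N)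
    (hℓN : ℓ ∣ N) (S : Finset (FreeGroup A)) (w : FreeGroup A) : W.HasSpelling N S w := by
  induction hc : S.card using Nat.strong_induction_on generalizing S w with | _ c ih_card
  induction hn : w.norm using Nat.strong_induction_on generalizing S w with | _ n ih_norm
  subst hc hn
  have ih_card' : ∀ T g, T.card < S.card → W.HasSpelling N T g := fun T g hT => ih_card _ hT T g rfl
  refine .of_forall_lt hW hprim hN hℓN (X := FreeGroup A ⧸ conjClosure (W.arcProd 0 N) S)
    (v₀ := ((1 : FreeGroup A) : FreeGroup A ⧸ conjClosure (W.arcProd 0 N) S))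
    (MulAction.stabilizer_quotient _) ih_card' fun T g hT hg => ?_
  rcases hT.lt_or_eq with hT | hT
  · exact ih_card' T g hT
  · exact ih_norm _ hg T g hT rfl

end Arcs

end CyclicWord

/-! ### Cyclically reduced words -/

namespace CyclicWord

section Root

variable {A : Type*} {ℓ : ℕ} {W : CyclicWord A ℓ}

theorem arc_infix_arc_zero [NeZero ℓ] (i : ZMod ℓ) {m N : ℕ} (h : ℓ - 1 + m ≤ N) :
    W.arc i m <:+: W.arc 0 N := by
  have hi := i.val_lt
  obtain ⟨r, rfl⟩ : ∃ r, N = i.val + (m + r) := ⟨N - i.val - m, by lia⟩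
  refine ⟨W.arc 0 i.val, W.arc (i + m) r, ?_⟩
  simp [arc_add]

theorem arc_prefix_arc (i : ZMod ℓ) {s t : ℕ} (h : s ≤ t) : W.arc i s <+: W.arc i t := by
  obtain ⟨r, rfl⟩ := Nat.exists_eq_add_of_le h
  exact arc_add W i s r ▸ List.prefix_append _ _

theorem arcProd_zero_mul (n : ℕ) : W.arcProd 0 (n * ℓ) = W.arcProd 0 ℓ ^ n := by
  induction n with
  | zero => simp
  | succ n ih => simp [add_mul, arcProd_add, ih, pow_succ]

theorem exists_isPrimitive [NeZero ℓ] (W : CyclicWord A ℓ) :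
    ∃ (p : ℕ) (_ : NeZero p) (V : CyclicWord A p),
      V.IsPrimitive ∧ p ∣ ℓ ∧ ∀ k : ℕ, V k = W k := by
  classical
  let f : ℕ → A × Bool := fun k => W k
  have hℓ : Function.Periodic f ℓ := fun k => by simp [f]
  have hex : ∃ p, 0 < p ∧ Function.Periodic f p := ⟨ℓ, NeZero.pos ℓ, hℓ⟩
  obtain ⟨hpos, hper⟩ := Nat.find_spec hex
  have hmin (q : ℕ) (hq : q < Nat.find hex) (hqper : Function.Periodic f q) : q = 0 := by
    by_contra hq0
    exact Nat.find_min hex hq ⟨Nat.pos_of_ne_zero hq0, hqper⟩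
  generalize Nat.find hex = p at *
  have : NeZero p := ⟨hpos.ne'⟩
  have hV (k : ℕ) : f (k : ZMod p).val = f k := by rw [ZMod.val_natCast, hper.map_mod_nat]
  refine ⟨p, this, fun j => f j.val, fun d hd => ?_, ?_, hV⟩
  · refine (ZMod.val_eq_zero d).1 (hmin _ d.val_lt fun k => ?_)
    rw [← hV (k + d.val), ← hV k, Nat.cast_add, ZMod.natCast_zmod_val]
    exact hd k
  · refine Nat.dvd_of_mod_eq_zero (hmin _ (Nat.mod_lt _ hpos) fun k => ?_)
    rw [← hℓ k, ← (hper.nat_mul (ℓ / p)) (k + ℓ % p)]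
    congr 1
    have := Nat.mod_add_div' ℓ p
    lia

theorem containsArc_of_mem_normalClosure [DecidableEq A] [NeZero ℓ] (hW : W.IsReduced) {N : ℕ}
    (hN : 0 < N) (hℓN : ℓ ∣ N) {w : FreeGroup A}
    (hw : w ∈ Subgroup.normalClosure ({W.arcProd 0 N} : Set (FreeGroup A))) (hne : w ≠ 1) :
    W.ContainsArc (N - ℓ + 1) w := by
  obtain ⟨p, _, V, hprim, hpℓ, hVW⟩ := exists_isPrimitive W
  have harc (k t : ℕ) : V.arc k t = W.arc k t := by
    simp only [arc, ← Nat.cast_add, hVW]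
  have hV : V.IsReduced := fun i => by
    have := hW i.val
    rwa [← Nat.cast_succ, ← hVW, ← hVW, Nat.cast_succ, ZMod.natCast_zmod_val] at this
  have harc₀ : V.arcProd 0 N = W.arcProd 0 N := by
    simpa [arcProd] using congrArg FreeGroup.mk (harc 0 N)
  obtain ⟨S, hS⟩ := exists_mem_conjClosure_of_mem_normalClosure (harc₀ ▸ hw)
  obtain ⟨i, hi⟩ := V.hasSpelling hV hprim hN (hpℓ.trans hℓN) S w hS hne
  have hle := Nat.le_of_dvd (NeZero.pos ℓ) hpℓ
  have hinfix : W.arc i.val (N - ℓ + 1) <:+: V.arc i (N - p + 1) := by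
    rw [← harc, ZMod.natCast_zmod_val]
    exact (arc_prefix_arc i (by lia)).isInfix
  exact ⟨i.val, hi.imp hinfix.trans (invRev_infix_invRev hinfix).trans⟩

theorem exists_infix_of_mem_normalClosure [DecidableEq A] [NeZero ℓ] (hW : W.IsReduced) {N : ℕ}
    (hN : 0 < N) (hℓN : ℓ ∣ N) {w : FreeGroup A}
    (hw : w ∈ Subgroup.normalClosure ({W.arcProd 0 N} : Set (FreeGroup A))) (hne : w ≠ 1) :
    ∃ u, u <:+: w.toWord ∧ (u <:+: W.arc 0 N ∨ FreeGroup.invRev u <:+: W.arc 0 N) ∧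
      u.length = N - ℓ + 1 := by
  obtain ⟨i, hi⟩ := containsArc_of_mem_normalClosure hW hN hℓN hw hne
  have hinfix : W.arc i (N - ℓ + 1) <:+: W.arc 0 N := arc_infix_arc_zero i <| by
    have := Nat.le_of_dvd hN hℓN
    have := NeZero.pos ℓ
    lia
  rcases hi with hi | hi
  · exact ⟨_, hi, .inl hinfix, W.length_arc ..⟩
  · exact ⟨_, hi, .inr (by rwa [FreeGroup.invRev_invRev]), by simp⟩

end Root

section OfList

variable {A : Type*} {r : List (A × Bool)} [NeZero r.length]

variable (r) in
/-- The cyclic word obtained by joining the ends of a nonempty list. -/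
def ofList : CyclicWord A r.length := fun i => r[i.val]'i.val_lt

theorem ofList_natCast {k : ℕ} (hk : k < r.length) : ofList r k = r[k] := by
  simp only [ofList, ZMod.val_natCast_of_lt hk]

theorem arc_ofList : (ofList r).arc 0 r.length = r := by
  refine List.ext_getElem (length_arc ..) fun k _ hk => ?_
  simp [arc, ofList_natCast hk]

theorem isReduced_ofList (hr : FreeGroup.IsReduced r)
    (hcyc : ∀ x, r.head? = some x → r.getLast? ≠ some (letterInv x)) : (ofList r).IsReduced := by
  intro i
  obtain ⟨k, hk, rfl⟩ : ∃ k < r.length, (k : ZMod r.length) = i :=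
    ⟨i.val, i.val_lt, ZMod.natCast_zmod_val i⟩
  rw [← Nat.cast_succ, ofList_natCast hk]
  rcases (Nat.succ_le_of_lt hk).lt_or_eq with hlt | heq
  · rw [ofList_natCast hlt]
    intro h
    have := List.isChain_iff_getElem.1 hr k hlt
    simp only [h, letterInv] at this
    simp at this
  · have hpos : 0 < r.length := NeZero.pos _
    rw [heq, ZMod.natCast_self, ← Nat.cast_zero, ofList_natCast hpos]
    intro h
    refine hcyc r[0] (by simp [List.head?_eq_getElem?, hpos]) ?_
    rw [h, letterInv_letterInv, List.getLast?_eq_getElem?, ← heq, Nat.succ_sub_one,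
      List.getElem?_eq_getElem hk]

end OfList

end CyclicWord

theorem bb_newman_spelling_theorem_general {A : Type*} [DecidableEq A]
    (R : FreeGroup A) (hcyc : FreeGroup.CyclicallyReduced R) (n : ℕ)
    (w : FreeGroup A) (hw : w ≠ 1)
    (hmem : w ∈ Subgroup.normalClosure ({R ^ n} : Set (FreeGroup A))) :
    ∃ u : List (A × Bool), u <:+: w.toWord ∧
      (u <:+: (R ^ n).toWord ∨ FreeGroup.wordInv u <:+: (R ^ n).toWord) ∧
      n * u.length > (n - 1) * (R ^ n).toWord.length := by
  have hRn : R ^ n ≠ 1 := fun h => hw <| Subgroup.mem_bot.1 <|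
    Subgroup.normalClosure_le_normal (N := ⊥) (by simp [h]) hmem
  have hℓ : NeZero R.toWord.length := ⟨fun h => hRn <| by
    rw [FreeGroup.norm_eq_zero.1 h, one_pow]⟩
  have hn : 0 < n := Nat.pos_of_ne_zero fun h => hRn (h ▸ pow_zero R)
  let W := CyclicWord.ofList R.toWord
  have hW : W.IsReduced := CyclicWord.isReduced_ofList FreeGroup.isReduced_toWord hcyc
  have hRW : R ^ n = W.arcProd 0 (n * R.toWord.length) := by
    rw [W.arcProd_zero_mul, CyclicWord.arcProd, CyclicWord.arc_ofList, FreeGroup.mk_toWord]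
  rw [hRW] at hmem
  rw [hRW, CyclicWord.toWord_arcProd hW, CyclicWord.length_arc]
  obtain ⟨u, huw, hu, hlen⟩ := CyclicWord.exists_infix_of_mem_normalClosure hW
    (mul_pos hn hℓ.pos) (dvd_mul_left _ _) hmem hw
  refine ⟨u, huw, hu, ?_⟩
  rw [hlen, ← Nat.sub_one_mul, mul_add, mul_left_comm]
  lia

/-- **The B. B. Newman Spelling Theorem (1968).** -/
theorem bb_newman_spelling_theorem {A : Type*} [DecidableEq A]
    (R : FreeGroup A) (hR : R ≠ 1) (hcyc : FreeGroup.CyclicallyReduced R)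
    (hpow : ¬ ∃ (s : FreeGroup A) (k : ℕ), 2 ≤ k ∧ R = s ^ k)
    (n : ℕ) (hn : 2 ≤ n)
    (w : FreeGroup A) (hw : w ≠ 1)
    (hmem : w ∈ Subgroup.normalClosure ({R ^ n} : Set (FreeGroup A))) :
    ∃ u : List (A × Bool), u <:+: w.toWord ∧
      (u <:+: (R ^ n).toWord ∨ FreeGroup.wordInv u <:+: (R ^ n).toWord) ∧
      n * u.length > (n - 1) * (R ^ n).toWord.length :=
  bb_newman_spelling_theorem_general R hcyc n w hw hmem
end

section
/- Let g ≥ 2 and let ρ = [a₁,b₁][a₂,b₂]⋯[a_g,b_g] be the surface relator in the free group on 2g generators (indexed by a finite type), where [a,b] = a b a⁻¹ b⁻¹. Then the word problem for the surface group ⟨a₁, b₁, …, a_g, b_g | ρ = 1⟩ is decidable: the predicate on lists l : List ((Fin g × Fin 2) × Bool) given by 'the element FreeGroup.mk l lies in the normal closure of {ρ}' is a computable predicate (ComputablePred). -/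
/-!
Write `t = a₁`, `b = b₁` and `r = [a₂,b₂]⋯[a_g,b_g]`. The relation `⁅t, b⁆ * r = 1` says
`t * b * t⁻¹ = r⁻¹ * b`, and `r` involves neither `t` nor `b`. Hence the kernel of the map to `ℤ`
given by the exponent sum of `t` is free on `b` and the conjugates `t ^ i * y * t ^ (-i)` of the
remaining generators, and `t` acts on it by an explicit automorphism: it shifts the index `i` and
sends `b` to `r⁻¹ * b`. The group is therefore a semidirect product of a free group and `ℤ`, and a
word is multiplied out there letter by letter, applying the automorphism or its inverse for every
occurrence of `t` or `t⁻¹`.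
-/

/-- The surface relator `[a₁,b₁][a₂,b₂]⋯[a_g,b_g]` in the free group on the
`2g` generators `Fin g × Fin 2`, where `a i = of (i, 0)`, `b i = of (i, 1)` and
`[a,b] = a b a⁻¹ b⁻¹`. -/
def surfaceRelator (g : ℕ) : FreeGroup (Fin g × Fin 2) :=
  ((List.finRange g).map fun i =>
    FreeGroup.of (i, 0) * FreeGroup.of (i, 1) *
      (FreeGroup.of (i, 0))⁻¹ * (FreeGroup.of (i, 1))⁻¹).prod

open FreeGroup (of lift invRev reduce)
open SemidirectProduct (inl inr)
open scoped commutatorElement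

namespace SurfaceGroup

variable {α β : Type*}

section IntegerArithmetic

theorem encode_int (z : ℤ) :
    Encodable.encode z = if 0 ≤ z then 2 * z.toNat else 2 * (-z).toNat - 1 := by
  rcases z with k | k <;> rfl

theorem primrec_int_toNat : Primrec Int.toNat := by
  refine (Primrec.ite ?_ ?_ ?_ : Primrec fun z : ℤ =>
    if Encodable.encode z % 2 = 0 then Encodable.encode z / 2 else 0).of_eq fun z => ?_
  · exact Primrec.eq.comp (Primrec.nat_mod.comp .encode (.const 2)) (.const 0)
  · exact Primrec.nat_div.comp .encode (.const 2)
  · exact .const 0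
  · rw [encode_int]
    grind

theorem primrec_int_neg : Primrec ((-·) : ℤ → ℤ) := by
  refine Primrec.encode_iff.1 ((Primrec.ite ?_ ?_ ?_ : Primrec fun z : ℤ =>
    if Encodable.encode z % 2 = 0 then Encodable.encode z - 1 else Encodable.encode z + 1).of_eq
      fun z => ?_)
  · exact Primrec.eq.comp (Primrec.nat_mod.comp .encode (.const 2)) (.const 0)
  · exact Primrec.nat_sub.comp .encode (.const 1)
  · exact Primrec.succ.comp .encode
  · rw [encode_int, encode_int]
    grind

theorem primrec₂_int_subNatNat : Primrec₂ Int.subNatNat := by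
  refine Primrec.encode_iff.1 ((Primrec.ite ?_ ?_ ?_ : Primrec fun p : ℕ × ℕ =>
    if p.2 ≤ p.1 then 2 * (p.1 - p.2) else 2 * (p.2 - p.1) - 1).of_eq fun p => ?_)
  · exact Primrec.nat_le.comp .snd .fst
  · exact Primrec.nat_mul.comp (.const 2) (Primrec.nat_sub.comp .fst .snd)
  · exact Primrec.nat_sub.comp (Primrec.nat_mul.comp (.const 2) (Primrec.nat_sub.comp .snd .fst))
      (.const 1)
  · rw [encode_int, Int.subNatNat_eq_coe]
    grind

theorem primrec₂_int_add : Primrec₂ ((· + ·) : ℤ → ℤ → ℤ) := by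
  have neg_toNat : Primrec fun z : ℤ => (-z).toNat := primrec_int_toNat.comp primrec_int_neg
  refine (primrec₂_int_subNatNat.comp
    (Primrec.nat_add.comp (primrec_int_toNat.comp .fst) (primrec_int_toNat.comp .snd))
    (Primrec.nat_add.comp (neg_toNat.comp .fst) (neg_toNat.comp .snd))).of_eq fun p => ?_
  grind [Int.subNatNat_eq_coe]

end IntegerArithmetic

section FreeGroupWords

theorem mk_singleton (a : α) (e : Bool) :
    FreeGroup.mk [(a, e)] = cond e (of a) (of a)⁻¹ := by
  cases e <;> rfl

theorem mk_cons (a : α) (e : Bool) (l : List (α × Bool)) :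
    FreeGroup.mk ((a, e) :: l) = cond e (of a) (of a)⁻¹ * FreeGroup.mk l := by
  rw [← mk_singleton, FreeGroup.mul_mk, List.singleton_append]

/-- Multiplication of a reduced word by a letter on the left, cancelling the letter against the
head of the word where possible. Iterating it computes `FreeGroup.reduce`. -/
def cancelCons [DecidableEq α] (x : α × Bool) : List (α × Bool) → List (α × Bool)
  | [] => [x]
  | y :: l => if x.1 = y.1 ∧ x.2 = !y.2 then l else x :: y :: l

theorem reduce_eq_foldr_cancelCons [DecidableEq α] (l : List (α × Bool)) :
    reduce l = l.foldr cancelCons [] := by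
  induction l with
  | nil => rfl
  | cons x l ih =>
    rw [FreeGroup.reduce.cons, ih, List.foldr_cons]
    cases l.foldr cancelCons [] <;> rfl

theorem primrec₂_cancelCons [Primcodable α] [DecidableEq α] :
    Primrec₂ (cancelCons : α × Bool → List (α × Bool) → List (α × Bool)) := by
  have letter : Primrec fun p : ((α × Bool) × List (α × Bool)) × (α × Bool) × List (α × Bool) =>
      p.1.1 := Primrec.fst.comp .fst
  have head : Primrec fun p : ((α × Bool) × List (α × Bool)) × (α × Bool) × List (α × Bool) =>
      p.2.1 := Primrec.fst.comp .snd
  have tail : Primrec fun p : ((α × Bool) × List (α × Bool)) × (α × Bool) × List (α × Bool) =>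
      p.2.2 := Primrec.snd.comp .snd
  have cancels := (Primrec.eq.comp (Primrec.fst.comp letter) (Primrec.fst.comp head)).and
    (Primrec.eq.comp (Primrec.snd.comp letter) (Primrec.not.comp (Primrec.snd.comp head)))
  refine (Primrec.list_casesOn .snd (Primrec.list_cons.comp .fst (.const []))
    (Primrec.ite cancels tail
      (Primrec.list_cons.comp letter (Primrec.list_cons.comp head tail))).to₂).of_eq ?_
  rintro ⟨x, _ | ⟨y, l⟩⟩ <;> rfl

theorem primrecPred_mk_eq_one [Primcodable α] :
    PrimrecPred fun l : List (α × Bool) => FreeGroup.mk l = 1 := by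
  classical
  have reduce_primrec : Primrec (reduce : List (α × Bool) → List (α × Bool)) :=
    (Primrec.list_foldr .id (.const []) (primrec₂_cancelCons.comp (Primrec.fst.comp .snd)
      (Primrec.snd.comp .snd)).to₂).of_eq fun l => (reduce_eq_foldr_cancelCons l).symm
  refine (Primrec.eq.comp reduce_primrec (.const [])).of_eq fun l => ?_
  rw [← FreeGroup.toWord_mk, FreeGroup.toWord_eq_nil_iff]

/-- Substitution of the word `f a` for the letter `a` in a word: the effect on words of the
homomorphism of free groups that sends `a` to the element represented by `f a`. -/
def substWord (f : α → List (β × Bool)) (l : List (α × Bool)) : List (β × Bool) :=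
  l.flatMap fun x => cond x.2 (f x.1) (invRev (f x.1))

theorem mk_substWord (f : α → List (β × Bool)) (l : List (α × Bool)) :
    FreeGroup.mk (substWord f l) = lift (fun a => FreeGroup.mk (f a)) (FreeGroup.mk l) := by
  rw [FreeGroup.lift_mk]
  induction l with
  | nil => rfl
  | cons x l ih =>
    rw [List.map_cons, List.prod_cons, ← ih, substWord, List.flatMap_cons, ← FreeGroup.mul_mk]
    cases x.2 <;> simp [substWord, FreeGroup.inv_mk]

theorem primrec_invRev [Primcodable α] :
    Primrec (invRev : List (α × Bool) → List (α × Bool)) :=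
  Primrec.list_reverse.comp (Primrec.list_map .id
    ((Primrec.fst.comp .snd).pair (Primrec.not.comp (Primrec.snd.comp .snd))))

theorem primrec_substWord [Primcodable α] [Primcodable β] {f : α → List (β × Bool)}
    (hf : Primrec f) : Primrec (substWord f) :=
  Primrec.list_flatMap .id
    (Primrec.cond (Primrec.snd.comp .snd) (hf.comp (Primrec.fst.comp .snd))
      (primrec_invRev.comp (hf.comp (Primrec.fst.comp .snd))))

theorem primrecPred_map_mk_eq_one [Primcodable α] {S G : Type*} [Primcodable S] [Group G]
    {φ : FreeGroup α →* G} {value : S → G} {s₁ : S} {mulLetter : α × Bool → S → S}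
    (value_eq_one : PrimrecPred fun s => value s = 1) (value_one : value s₁ = 1)
    (primrec₂_mulLetter : Primrec₂ mulLetter)
    (value_mulLetter : ∀ x s, value (mulLetter x s) = φ (FreeGroup.mk [x]) * value s) :
    PrimrecPred fun l => φ (FreeGroup.mk l) = 1 := by
  have value_foldr (l : List (α × Bool)) :
      value (l.foldr mulLetter s₁) = φ (FreeGroup.mk l) := by
    induction l with
    | nil => rw [List.foldr_nil, value_one, ← FreeGroup.one_eq_mk, map_one]
    | cons x l ih =>
      rw [List.foldr_cons, value_mulLetter, ih, ← map_mul, FreeGroup.mul_mk, List.singleton_append]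
  have foldr_primrec : Primrec fun l : List (α × Bool) => l.foldr mulLetter s₁ :=
    Primrec.list_foldr .id (.const s₁)
      (primrec₂_mulLetter.comp (Primrec.fst.comp .snd) (Primrec.snd.comp .snd)).to₂
  refine (value_eq_one.comp foldr_primrec).of_eq fun l => ?_
  rw [value_foldr]

end FreeGroupWords

section CyclicExtension

variable {σ : MulAut (FreeGroup β)}

/-- The extension of `ℤ` by a free group in which the generator of `ℤ` acts by the automorphism
`σ`. -/
abbrev CyclicExtension (σ : MulAut (FreeGroup β)) : Type _ :=
  FreeGroup β ⋊[zpowersHom _ σ] Multiplicative ℤ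

/-- The element of a cyclic extension represented by a word and an exponent. -/
def ofWord (σ : MulAut (FreeGroup β)) (s : List (β × Bool) × ℤ) : CyclicExtension σ :=
  ⟨FreeGroup.mk s.1, .ofAdd s.2⟩

/-- Left multiplication of an element of a cyclic extension, represented by a word and an
exponent, by a letter over `α`. The letter `t` stands for the generator of `ℤ`, which acts on
words by `F` and its inverse by `F'`, and every other letter `a` for the free generator `c a`. -/
def mulLetter [DecidableEq α] (t : α) (c : α → β) (F F' : List (β × Bool) → List (β × Bool))
    (x : α × Bool) (s : List (β × Bool) × ℤ) : List (β × Bool) × ℤ :=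
  if x.1 = t then cond x.2 (F s.1, 1 + s.2) (F' s.1, -1 + s.2) else ((c x.1, x.2) :: s.1, s.2)

theorem primrecPred_ofWord_eq_one [Primcodable β] :
    PrimrecPred fun s => ofWord σ s = 1 := by
  refine ((primrecPred_mk_eq_one.comp .fst).and
    (Primrec.eq.comp .snd (.const 0))).of_eq fun s => ?_
  simp [SemidirectProduct.ext_iff, ofWord]

theorem primrec₂_mulLetter [Primcodable α] [Primcodable β] [DecidableEq α] {t : α} {c : α → β}
    {F F' : List (β × Bool) → List (β × Bool)} (hc : Primrec c) (hF : Primrec F)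
    (hF' : Primrec F') : Primrec₂ (mulLetter t c F F') := by
  have word : Primrec fun p : (α × Bool) × List (β × Bool) × ℤ => p.2.1 := Primrec.fst.comp .snd
  have exponent : Primrec fun p : (α × Bool) × List (β × Bool) × ℤ => p.2.2 :=
    Primrec.snd.comp .snd
  exact Primrec.ite (Primrec.eq.comp (Primrec.fst.comp .fst) (.const t))
    (Primrec.cond (Primrec.snd.comp .fst)
      ((hF.comp word).pair (primrec₂_int_add.comp (.const 1) exponent))
      ((hF'.comp word).pair (primrec₂_int_add.comp (.const (-1)) exponent)))
    ((Primrec.list_cons.comp ((hc.comp (Primrec.fst.comp .fst)).pair (Primrec.snd.comp .fst))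
      word).pair exponent)

theorem ofWord_mulLetter [DecidableEq α] {t : α} {c : α → β}
    {F F' : List (β × Bool) → List (β × Bool)} {φ : FreeGroup α →* CyclicExtension σ}
    (hF : ∀ l, FreeGroup.mk (F l) = σ (FreeGroup.mk l))
    (hF' : ∀ l, FreeGroup.mk (F' l) = σ⁻¹ (FreeGroup.mk l))
    (hφt : φ (of t) = inr (.ofAdd 1)) (hφ : ∀ a ≠ t, φ (of a) = inl (of (c a)))
    (x : α × Bool) (s : List (β × Bool) × ℤ) :
    ofWord σ (mulLetter t c F F' x s) = φ (FreeGroup.mk [x]) * ofWord σ s := by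
  obtain ⟨a, e⟩ := x
  rw [mk_singleton, Bool.apply_cond φ, map_inv]
  by_cases ha : a = t
  · subst ha
    cases e <;> ext <;> simp [mulLetter, ofWord, hφt, hF, hF']
  · cases e <;> ext <;> simp [mulLetter, ofWord, ha, hφ, mk_cons]

theorem primrecPred_map_mk_eq_one_of_cyclicExtension [Primcodable α] [Primcodable β] {t : α}
    {c : α → β} {F F' : List (β × Bool) → List (β × Bool)}
    {φ : FreeGroup α →* CyclicExtension σ}
    (hc : Primrec c) (hF : Primrec F) (hF' : Primrec F')
    (hFσ : ∀ l, FreeGroup.mk (F l) = σ (FreeGroup.mk l))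
    (hFσ' : ∀ l, FreeGroup.mk (F' l) = σ⁻¹ (FreeGroup.mk l))
    (hφt : φ (of t) = inr (.ofAdd 1)) (hφ : ∀ a ≠ t, φ (of a) = inl (of (c a))) :
    PrimrecPred fun l => φ (FreeGroup.mk l) = 1 := by
  classical
  exact primrecPred_map_mk_eq_one (s₁ := ([], 0)) primrecPred_ofWord_eq_one rfl
    (primrec₂_mulLetter hc hF hF') (ofWord_mulLetter hFσ hFσ' hφt hφ)

end CyclicExtension

section TwistedShift

variable {b : α} {r w : FreeGroup α}

/-- The copy of the free group on `α` at level `i` in the free group on `α × ℤ`; its generator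
`(y, i)` plays the role of the conjugate `t ^ i * y * t ^ (-i)`. -/
def level (i : ℤ) : FreeGroup α →* FreeGroup (α × ℤ) :=
  FreeGroup.map fun a => (a, i)

variable [DecidableEq α]

/-- The endomorphism of the free group on `α × ℤ` that raises the level of generators by `k`,
except for those over `b`, which it multiplies by `u` on the left instead. Only one generator over
`b` is ever needed; having one on each level keeps the index type simple. -/
def twistedShift (b : α) (k : ℤ) (u : FreeGroup (α × ℤ)) :
    FreeGroup (α × ℤ) →* FreeGroup (α × ℤ) :=
  lift fun x => if x.1 = b then u * of x else of (x.1, x.2 + k)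

theorem twistedShift_of_self (k : ℤ) (u : FreeGroup (α × ℤ)) (i : ℤ) :
    twistedShift b k u (of (b, i)) = u * of (b, i) := by
  simp [twistedShift]

theorem twistedShift_of_ne {a : α} (ha : a ≠ b) (k : ℤ) (u : FreeGroup (α × ℤ)) (i : ℤ) :
    twistedShift b k u (of (a, i)) = of (a, i + k) := by
  simp [twistedShift, ha]

theorem twistedShift_level (hw : w ∈ Subgroup.closure (of '' {b}ᶜ)) (k : ℤ)
    (u : FreeGroup (α × ℤ)) (i : ℤ) : twistedShift b k u (level i w) = level (i + k) w := by
  have agree : Set.EqOn ((twistedShift b k u).comp (level i)) (level (i + k)) (of '' {b}ᶜ) := by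
    rintro _ ⟨a, ha, rfl⟩
    exact twistedShift_of_ne ha k u i
  exact MonoidHom.eqOn_closure agree hw

theorem twistedShift_comp_eq_id {k m : ℤ} {u v : FreeGroup (α × ℤ)} (hkm : m + k = 0)
    (huv : twistedShift b k u v * u = 1) :
    (twistedShift b k u).comp (twistedShift b m v) = MonoidHom.id _ := by
  ext ⟨a, i⟩
  by_cases ha : a = b
  · subst ha
    simp [twistedShift_of_self, ← mul_assoc, huv]
  · simp [twistedShift_of_ne ha, add_assoc, hkm]

/-- The automorphism of the free group on `α × ℤ` that conjugation by `t` induces if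
`t * b * t⁻¹ = r⁻¹ * b`, where `r` does not involve `b`. -/
def monodromy (hr : r ∈ Subgroup.closure (of '' {b}ᶜ)) : MulAut (FreeGroup (α × ℤ)) :=
  MonoidHom.toMulEquiv (twistedShift b 1 (level 0 r)⁻¹) (twistedShift b (-1) (level (-1) r))
    (twistedShift_comp_eq_id (by simp) (by simp [twistedShift_level hr]))
    (twistedShift_comp_eq_id (by simp) (by simp [twistedShift_level hr]))

/-- A word representing `twistedShift b k u (of x)`, where `u` is given by a word. -/
def twistedShiftWord (b : α) (k : ℤ) (u : List ((α × ℤ) × Bool)) (x : α × ℤ) :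
    List ((α × ℤ) × Bool) :=
  if x.1 = b then u ++ [(x, true)] else [((x.1, x.2 + k), true)]

theorem mk_substWord_twistedShiftWord (k : ℤ) (u : FreeGroup (α × ℤ))
    (l : List ((α × ℤ) × Bool)) :
    FreeGroup.mk (substWord (twistedShiftWord b k u.toWord) l) =
      twistedShift b k u (FreeGroup.mk l) := by
  rw [mk_substWord, twistedShift]
  congr 2 with x
  unfold twistedShiftWord
  split_ifs
  · rw [← FreeGroup.mul_mk, FreeGroup.mk_toWord]
    rfl
  · rfl

theorem primrec_twistedShiftWord [Primcodable α] (k : ℤ) (u : List ((α × ℤ) × Bool)) :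
    Primrec (twistedShiftWord b k u) :=
  Primrec.ite (Primrec.eq.comp .fst (.const b))
    (Primrec.list_append.comp (.const u)
      (Primrec.list_cons.comp (Primrec.id.pair (.const true)) (.const [])))
    (Primrec.list_cons.comp
      ((Primrec.fst.pair (primrec₂_int_add.comp .snd (.const k))).pair (.const true)) (.const []))

end TwistedShift

section Splitting

theorem comp_zpow_eq_conj_zpow_comp {N G : Type*} [Group N] [Group G] {f : N →* G}
    {σ : MulAut N} {c : G}
    (h : f.comp σ.toMonoidHom = (MulAut.conj c).toMonoidHom.comp f) (n : ℤ) :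
    f.comp (σ ^ n).toMonoidHom = (MulAut.conj (c ^ n)).toMonoidHom.comp f := by
  have apply_one (k : N) : f (σ k) = MulAut.conj c (f k) := DFunLike.congr_fun h k
  have apply_neg_one (k : N) : f (σ⁻¹ k) = (MulAut.conj c)⁻¹ (f k) := by
    nth_rw 2 [← MulAut.apply_inv_self N σ k]
    rw [apply_one, MulAut.inv_apply_self]
  ext k
  change f ((σ ^ n) k) = MulAut.conj (c ^ n) (f k)
  rw [map_zpow]
  induction n generalizing k with
  | zero => rfl
  | succ n ih => rw [zpow_add_one, zpow_add_one, MulAut.mul_apply, MulAut.mul_apply, ih, apply_one]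
  | pred n ih =>
    rw [zpow_sub_one, zpow_sub_one, MulAut.mul_apply, MulAut.mul_apply, ih, apply_neg_one]

theorem conj_eq_of_map_relator_eq_one {t b : α} {r : FreeGroup α} {G : Type*} [Group G]
    {q : FreeGroup α →* G} (hq : q (⁅of t, of b⁆ * r) = 1) :
    MulAut.conj (q (of t)) (q (of b)) = (q r)⁻¹ * q (of b) := by
  rw [commutatorElement_def, map_mul, mul_eq_one_iff_eq_inv] at hq
  rw [← hq, MulAut.conj_apply]
  simp

variable [DecidableEq α] {t b : α} {r w : FreeGroup α}

/-- The homomorphism realizing the group `⟨α | ⁅t, b⁆ * r = 1⟩` inside a semidirect product of a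
free group and `ℤ`: it sends `t` to the generator of `ℤ` and every other generator to its copy at
level `0`. -/
def toCyclicExtension (t : α) (hb : r ∈ Subgroup.closure (of '' {b}ᶜ)) :
    FreeGroup α →* CyclicExtension (monodromy hb) :=
  lift fun a => if a = t then inr (.ofAdd 1) else inl (of (a, 0))

theorem toCyclicExtension_of_self (hb : r ∈ Subgroup.closure (of '' {b}ᶜ)) :
    toCyclicExtension t hb (of t) = inr (.ofAdd 1) := by
  simp [toCyclicExtension]

theorem toCyclicExtension_of_ne (hb : r ∈ Subgroup.closure (of '' {b}ᶜ)) {a : α} (ha : a ≠ t) :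
    toCyclicExtension t hb (of a) = inl (of (a, 0)) := by
  simp [toCyclicExtension, ha]

theorem toCyclicExtension_eq_inl_level (hb : r ∈ Subgroup.closure (of '' {b}ᶜ))
    (hw : w ∈ Subgroup.closure (of '' {t}ᶜ)) : toCyclicExtension t hb w = inl (level 0 w) := by
  have agree : Set.EqOn (toCyclicExtension t hb) (inl.comp (level 0)) (of '' {t}ᶜ) := by
    rintro _ ⟨a, ha, rfl⟩
    exact toCyclicExtension_of_ne hb ha
  exact MonoidHom.eqOn_closure agree hw

theorem toCyclicExtension_relator (htb : b ≠ t) (ht : r ∈ Subgroup.closure (of '' {t}ᶜ))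
    (hb : r ∈ Subgroup.closure (of '' {b}ᶜ)) :
    toCyclicExtension t hb (⁅of t, of b⁆ * r) = 1 := by
  have hconj : (inr (.ofAdd 1) * inl (of (b, 0)) * (inr (.ofAdd 1))⁻¹ :
      CyclicExtension (monodromy hb)) = inl ((level 0 r)⁻¹ * of (b, 0)) := by
    rw [← map_inv, ← SemidirectProduct.inl_aut, ← twistedShift_of_self 1]
    simp [monodromy]
  rw [commutatorElement_def, map_mul, map_mul, map_mul, map_mul, map_inv, map_inv,
    toCyclicExtension_of_self, toCyclicExtension_of_ne hb htb,
    toCyclicExtension_eq_inl_level hb ht, hconj, map_mul, map_inv]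
  group

variable {G : Type*} [Group G] {q : FreeGroup α →* G}

/-- The interpretation of the free group on `α × ℤ` in a group generated by the image of `α`: the
generator `(y, i)` becomes `t ^ i * y * t ^ (-i)`, and those over `b` become `b`. -/
def fiberHom (t b : α) (q : FreeGroup α →* G) : FreeGroup (α × ℤ) →* G :=
  lift fun x => if x.1 = b then q (of b) else MulAut.conj (q (of t) ^ x.2) (q (of x.1))

theorem fiberHom_of_self (i : ℤ) : fiberHom t b q (of (b, i)) = q (of b) := by
  simp [fiberHom]

theorem fiberHom_of_ne {a : α} (ha : a ≠ b) (i : ℤ) :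
    fiberHom t b q (of (a, i)) = MulAut.conj (q (of t) ^ i) (q (of a)) := by
  simp [fiberHom, ha]

theorem fiberHom_comp_level_zero : (fiberHom t b q).comp (level 0) = q := by
  ext a
  by_cases ha : a = b
  · subst ha
    exact fiberHom_of_self 0
  · simpa [level] using fiberHom_of_ne ha 0

theorem fiberHom_comp_monodromy (hb : r ∈ Subgroup.closure (of '' {b}ᶜ))
    (hq : q (⁅of t, of b⁆ * r) = 1) :
    (fiberHom t b q).comp (monodromy hb).toMonoidHom =
      (MulAut.conj (q (of t))).toMonoidHom.comp (fiberHom t b q) := by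
  have fiberHom_level (w : FreeGroup α) : fiberHom t b q (level 0 w) = q w :=
    DFunLike.congr_fun fiberHom_comp_level_zero w
  change (fiberHom t b q).comp (twistedShift b 1 (level 0 r)⁻¹) = _
  ext ⟨a, i⟩
  by_cases ha : a = b
  · subst ha
    simpa [twistedShift_of_self, fiberHom_of_self, fiberHom_level] using
      (conj_eq_of_map_relator_eq_one hq).symm
  · simp [twistedShift_of_ne ha, fiberHom_of_ne ha, add_comm i, zpow_add, mul_assoc]

theorem exists_comp_toCyclicExtension_eq (hb : r ∈ Subgroup.closure (of '' {b}ᶜ))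
    (hq : q (⁅of t, of b⁆ * r) = 1) :
    ∃ f : CyclicExtension (monodromy hb) →* G, f.comp (toCyclicExtension t hb) = q := by
  have equivariant (n : Multiplicative ℤ) :
      (fiberHom t b q).comp (zpowersHom _ (monodromy hb) n).toMonoidHom =
        (MulAut.conj (zpowersHom G (q (of t)) n)).toMonoidHom.comp (fiberHom t b q) :=
    comp_zpow_eq_conj_zpow_comp (fiberHom_comp_monodromy hb hq) n.toAdd
  refine ⟨SemidirectProduct.lift _ _ equivariant, ?_⟩
  ext a
  by_cases ha : a = t
  · subst ha
    rw [MonoidHom.comp_apply, toCyclicExtension_of_self, SemidirectProduct.lift_inr]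
    simp
  · rw [MonoidHom.comp_apply, toCyclicExtension_of_ne hb ha, SemidirectProduct.lift_inl]
    exact DFunLike.congr_fun fiberHom_comp_level_zero (of a)

theorem ker_toCyclicExtension (htb : b ≠ t) (ht : r ∈ Subgroup.closure (of '' {t}ᶜ))
    (hb : r ∈ Subgroup.closure (of '' {b}ᶜ)) :
    (toCyclicExtension t hb).ker = Subgroup.normalClosure {⁅of t, of b⁆ * r} := by
  apply le_antisymm
  · obtain ⟨f, hf⟩ := exists_comp_toCyclicExtension_eq (t := t) (q := QuotientGroup.mk'
      (Subgroup.normalClosure {⁅of t, of b⁆ * r})) hb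
      ((QuotientGroup.eq_one_iff _).2 (Subgroup.subset_normalClosure rfl))
    intro w hw
    rw [← QuotientGroup.ker_mk' (Subgroup.normalClosure _), ← hf, MonoidHom.mem_ker,
      MonoidHom.comp_apply, MonoidHom.mem_ker.1 hw, map_one]
  · exact Subgroup.normalClosure_le_normal
      (Set.singleton_subset_iff.2 (toCyclicExtension_relator htb ht hb))

end Splitting

theorem exists_surfaceRelator_succ_eq (n : ℕ) :
    ∃ r ∈ Subgroup.closure (of '' {((0, 0) : Fin (n + 1) × Fin 2), (0, 1)}ᶜ),
      surfaceRelator (n + 1) = ⁅of ((0, 0) : Fin (n + 1) × Fin 2), of (0, 1)⁆ * r := by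
  refine ⟨((List.finRange n).map fun i =>
      ⁅(of (i.succ, 0) : FreeGroup (Fin (n + 1) × Fin 2)), of (i.succ, 1)⁆).prod,
    Subgroup.list_prod_mem _ ?_, ?_⟩
  · have of_succ_mem (i : Fin n) (j : Fin 2) :
        of (i.succ, j) ∈ Subgroup.closure (of '' {((0, 0) : Fin (n + 1) × Fin 2), (0, 1)}ᶜ) :=
      Subgroup.subset_closure ⟨_, by simp [Fin.succ_ne_zero], rfl⟩
    simp only [List.forall_mem_map]
    intro i _
    exact Subgroup.commutator_le_self _
      (Subgroup.commutator_mem_commutator (of_succ_mem i 0) (of_succ_mem i 1))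
  · simp [surfaceRelator, commutatorElement_def, List.finRange_succ, Function.comp_def]

end SurfaceGroup

open SurfaceGroup in
theorem surface_group_word_problem_decidable_general {α : Type*} [Primcodable α] {t b : α}
    (htb : b ≠ t) {r : FreeGroup α} (hr : r ∈ Subgroup.closure (of '' {t, b}ᶜ)) :
    PrimrecPred fun l : List (α × Bool) =>
      FreeGroup.mk l ∈ Subgroup.normalClosure {⁅of t, of b⁆ * r} := by
  classical
  have ht : r ∈ Subgroup.closure (of '' {t}ᶜ) :=
    Subgroup.closure_mono (Set.image_mono (by simp)) hr
  have hb : r ∈ Subgroup.closure (of '' {b}ᶜ) :=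
    Subgroup.closure_mono (Set.image_mono (by simp)) hr
  refine (primrecPred_map_mk_eq_one_of_cyclicExtension (φ := toCyclicExtension t hb)
    (Primrec.id.pair (.const 0)) (primrec_substWord (primrec_twistedShiftWord _ _))
    (primrec_substWord (primrec_twistedShiftWord _ _)) (mk_substWord_twistedShiftWord 1 _)
    (mk_substWord_twistedShiftWord (-1) _) (toCyclicExtension_of_self hb)
    fun a ha => toCyclicExtension_of_ne hb ha).of_eq fun l => ?_
  rw [← ker_toCyclicExtension htb ht hb, MonoidHom.mem_ker]

/-- **Dehn (1912):** the word problem for surface groups of genus `g ≥ 2` is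
decidable. -/
theorem surface_group_word_problem_decidable (g : ℕ) (hg : 2 ≤ g) :
    ComputablePred fun l : List ((Fin g × Fin 2) × Bool) =>
      FreeGroup.mk l ∈
        Subgroup.normalClosure ({surfaceRelator g} : Set (FreeGroup (Fin g × Fin 2))) := by
  obtain ⟨n, rfl⟩ := Nat.exists_eq_add_of_le' (one_le_two.trans hg)
  obtain ⟨r, hr, relator_eq⟩ := SurfaceGroup.exists_surfaceRelator_succ_eq n
  rw [relator_eq]
  exact (surface_group_word_problem_decidable_general (by simp) hr).computablePred
end

section
/- (Freiheitssatz / Magnus 1930) Let A be a type and let w be a nontrivial, cyclically reduced element of FreeGroup A. Let B ⊆ A be a subset such that at least one letter of A occurring in the reduced word of w does not belong to B. Then the group homomorphism from FreeGroup B to the one-relator group ⟨A | w = 1⟩ induced by the inclusion B ↪ A is injective; that is, the subgroup of ⟨A | w = 1⟩ generated by the images of the generators in B is a free group freely generated by them. -/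
/-! The proof is by induction on the length of `w`. Let `x` occur in `w`.

If `x` has exponent sum zero in `w`, write `w` as a word `r` in the conjugates
`(a, i) = xⁱ * a * x⁻ⁱ` with `a ≠ x`. This word is cyclically reduced, shorter than `w`, and the
heights `i` of its letters range from some `m` to some `M > m`. By induction, in `⟨A × ℤ ∣ r⟩` the
generators of height in `[m, M)` and those of height in `(m, M]` are bases of free subgroups, so
there is an HNN extension whose stable letter `t` raises heights by one. Mapping `x` to `t` and
`a` to `(a, m)` kills `w`, and it embeds the free group on the generators other than `x`.

If the exponent sum `e` of `x` in `w` is nonzero, let `u ≠ 1` be an element of the free group on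
the generators other than `x`, and choose a prime `p > |e|`. Free groups are residually finite
`p`-groups, so `u` survives in some finite `p`-group. Since `p` does not divide `e`, the equation
`w = 1` can be solved for `x` there, by induction along the central series, and so `u` survives
in `⟨A ∣ w = 1⟩` as well. -/

namespace Magnus

open FreeGroup hiding norm norm_mul_le IsReduced map_mul map_one map_inv
open Multiplicative

universe u

variable {A : Type*} [DecidableEq A]

section Norm

theorem isReduced_of_length_le_norm {L : List (A × Bool)} (h : L.length ≤ (mk L).norm) :
    FreeGroup.IsReduced L :=
  .of_reduce_eq <| (toWord_mk (L₁ := L) ▸ Red.sublist reduce.red).eq_of_length_le h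

theorem norm_pow_of_isCyclicallyReduced {w : FreeGroup A} (hw : IsCyclicallyReduced w.toWord)
    (n : ℕ) : (w ^ n).norm = n * w.norm := by
  rw [FreeGroup.norm, toWord_pow, (hw.flatten_replicate n).isReduced.reduce_eq]
  simp [FreeGroup.norm]

theorem isCyclicallyReduced_toWord_iff_isReduced_append {w : FreeGroup A} :
    IsCyclicallyReduced w.toWord ↔ FreeGroup.IsReduced (w.toWord ++ w.toWord) := by
  rw [isCyclicallyReduced_iff, FreeGroup.IsReduced, FreeGroup.IsReduced, List.isChain_append]
  have := isReduced_toWord (x := w)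
  rw [FreeGroup.IsReduced] at this
  tauto

theorem isCyclicallyReduced_toWord_of_norm_sq {w : FreeGroup A} (h : (w * w).norm = 2 * w.norm) :
    IsCyclicallyReduced w.toWord := by
  refine isCyclicallyReduced_toWord_iff_isReduced_append.2 (isReduced_of_length_le_norm ?_)
  rw [← mul_mk, mk_toWord, h, List.length_append, two_mul]
  rfl

theorem isCyclicallyReduced_of_cyclicallyReduced {w : FreeGroup A} (hw : w.CyclicallyReduced) :
    IsCyclicallyReduced w.toWord := by
  refine ⟨isReduced_toWord, fun y hy x hx hxy ↦ ?_⟩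
  by_contra hne
  exact hw x hx (hy.trans (congrArg some (Prod.ext hxy (Bool.eq_not.2 hne))))

theorem norm_map_le {S : Type*} [DecidableEq S] (f : S → A) (v : FreeGroup S) :
    (FreeGroup.map f v).norm ≤ v.norm := by
  conv_lhs => rw [← mk_toWord (x := v), map.mk]
  exact norm_mk_le.trans_eq (List.length_map _)

theorem norm_pow_le (w : FreeGroup A) (n : ℕ) : (w ^ n).norm ≤ n * w.norm := by
  induction n with
  | zero => simp
  | succ n ih => grw [pow_succ, FreeGroup.norm_mul_le, ih, add_one_mul]

theorem norm_of_zpow (a : A) (k : ℤ) : (of a ^ k).norm = k.natAbs := by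
  cases k using Int.negInduction <;> simp [norm_of_pow]

theorem lift_congr_of_forall_mem_toWord {G : Type*} [Group G] {f g : A → G} {w : FreeGroup A}
    (h : ∀ c ∈ w.toWord, f c.1 = g c.1) : lift f w = lift g w := by
  rw [← mk_toWord (x := w), lift_mk, lift_mk]
  congr 1
  exact List.map_congr_left fun c hc ↦ by simp [h c hc]

end Norm

section NormAway

/-- The number of letters of the reduced word of `w` different from `x`. It is the length of `w`
after Magnus rewriting (`norm_left_rewriting`). -/
def normAway (x : A) (w : FreeGroup A) : ℕ :=
  w.toWord.countP (·.1 ≠ x)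

variable (x : A)

@[simp]
theorem normAway_one : normAway x 1 = 0 := by simp [normAway]

theorem normAway_mul_le (v w : FreeGroup A) :
    normAway x (v * w) ≤ normAway x v + normAway x w :=
  (toWord_mul_sublist v w).countP_le.trans_eq List.countP_append

@[simp]
theorem normAway_inv (w : FreeGroup A) : normAway x w⁻¹ = normAway x w := by
  simp [normAway, invRev, List.countP_map, Function.comp_def]

@[simp]
theorem normAway_of_zpow_self (k : ℤ) : normAway x (of x ^ k) = 0 := by
  cases k using Int.negInduction <;> simp [normAway, toWord_of_pow, invRev]

theorem normAway_of_le (a : A) : normAway x (of a) ≤ 1 :=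
  List.countP_le_length.trans (norm_of a).le

theorem normAway_lt_norm {w : FreeGroup A} (hx : ∃ b, (x, b) ∈ w.toWord) :
    normAway x w < w.norm := by
  obtain ⟨b, hb⟩ := hx
  exact List.countP_lt_length_iff.2 ⟨_, hb, by simp⟩

theorem normAway_sq_of_isCyclicallyReduced {w : FreeGroup A} (hw : IsCyclicallyReduced w.toWord) :
    normAway x (w * w) = 2 * normAway x w := by
  rw [normAway, toWord_mul, (isCyclicallyReduced_toWord_iff_isReduced_append.1 hw).reduce_eq,
    List.countP_append, two_mul]
  rfl

theorem normAway_lift_le {T : Type*} [DecidableEq T] {f : T → FreeGroup A}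
    (hf : ∀ t, normAway x (f t) ≤ 1) (v : FreeGroup T) : normAway x (lift f v) ≤ v.norm := by
  suffices h : ∀ L : List (T × Bool), normAway x (lift f (mk L)) ≤ L.length from
    (congrArg _ (congrArg _ mk_toWord.symm)).trans_le (h v.toWord)
  intro L
  induction L with
  | nil => simp
  | cons c L ih =>
    obtain ⟨t, b⟩ := c
    have hletter : normAway x (cond b (f t) (f t)⁻¹) ≤ 1 := by cases b <;> simp [hf]
    rw [lift_mk, List.map_cons, List.prod_cons, ← lift_mk, List.length_cons, add_comm]
    exact (normAway_mul_le ..).trans (add_le_add hletter ih)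

end NormAway

section Rewriting

/-- The action of `ℤ` on `FreeGroup (A × ℤ)` in which `k` sends the generator `(a, i)` to
`(a, i + k)`. It models conjugation by `x ^ k` when `(a, i)` stands for `xⁱ * a * x⁻ⁱ`. -/
def shift (A : Type*) : Multiplicative ℤ →* MulAut (FreeGroup (A × ℤ)) where
  toFun k := freeGroupCongr (.prodCongr (.refl A) (.addRight k.toAdd))
  map_one' := by ext; simp
  map_mul' k l := by
    refine MulEquiv.toMonoidHom_injective (FreeGroup.ext_hom _ _ fun ⟨a, i⟩ ↦ ?_)
    simp [add_left_comm, add_comm]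

@[simp]
theorem shift_of {A : Type*} (k : Multiplicative ℤ) (q : A × ℤ) :
    shift A k (of q) = of (q.1, q.2 + k.toAdd) := by
  simp [shift, Prod.map_def]

/-- Magnus rewriting: `x` is sent to the generator of `ℤ`, and every other generator `a` to the
letter `(a, 0)`. If `x` has exponent sum zero in `w`, then the left component of `rewriting x w` is
`w` written in terms of the conjugates `(a, i) = xⁱ * a * x⁻ⁱ`. -/
def rewriting (x : A) : FreeGroup A →* FreeGroup (A × ℤ) ⋊[shift A] Multiplicative ℤ :=
  lift (Function.update (fun a ↦ .inl (of (a, 0))) x (.inr (ofAdd 1)))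

/-- The sum of the exponents of `x` in a word, as an element of `Multiplicative ℤ`: exponent sum
zero reads `exponentSum x w = 1`. -/
def exponentSum (x : A) : FreeGroup A →* Multiplicative ℤ :=
  lift (Pi.mulSingle x (ofAdd 1))

variable (x : A)

theorem right_rewriting (w : FreeGroup A) : (rewriting x w).right = exponentSum x w := by
  suffices SemidirectProduct.rightHom.comp (rewriting x) = exponentSum x from
    DFunLike.congr_fun this w
  ext a
  obtain rfl | ha := eq_or_ne a x <;> simp [rewriting, exponentSum, *]

theorem lift_update_eq_lift_rewriting {G : Type*} [Group G] (f : A → G) (t : G) (w : FreeGroup A) :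
    lift (Function.update f x t) w =
      lift (fun q ↦ t ^ q.2 * f q.1 * (t ^ q.2)⁻¹) (rewriting x w).left *
        t ^ (exponentSum x w).toAdd := by
  let e : FreeGroup (A × ℤ) ⋊[shift A] Multiplicative ℤ →* G :=
    SemidirectProduct.lift (lift fun q ↦ t ^ q.2 * f q.1 * (t ^ q.2)⁻¹) (zpowersHom G t) fun k ↦ by
      ext ⟨a, i⟩
      simp only [MonoidHom.comp_apply, MulEquiv.coe_toMonoidHom, shift_of, lift_apply_of,
        zpowersHom_apply, MulAut.conj_apply]
      group
  have he : lift (Function.update f x t) = e.comp (rewriting x) := by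
    ext a
    obtain rfl | ha := eq_or_ne a x <;> simp [rewriting, e, *]
  rw [he, ← right_rewriting]
  simp [e, SemidirectProduct.lift]

theorem norm_shift_le (k : Multiplicative ℤ) (v : FreeGroup (A × ℤ)) :
    (shift A k v).norm ≤ v.norm :=
  norm_map_le _ v

theorem norm_left_rewriting_mk_le (L : List (A × Bool)) :
    (rewriting x (mk L)).left.norm ≤ L.countP (·.1 ≠ x) := by
  induction L with
  | nil => simp [← one_eq_mk]
  | cons c L ih =>
    obtain ⟨a, b⟩ := c
    have hletter : (rewriting x (mk [(a, b)])).left.norm ≤ if a ≠ x then 1 else 0 := by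
      obtain rfl | ha := eq_or_ne a x <;> cases b <;> simp [rewriting, *]
    rw [← List.singleton_append, ← mul_mk, map_mul, SemidirectProduct.mul_left,
      List.countP_append]
    refine (FreeGroup.norm_mul_le ..).trans (add_le_add ?_ ((norm_shift_le ..).trans ih))
    simpa [List.countP_singleton] using hletter

theorem norm_left_rewriting (w : FreeGroup A) :
    (rewriting x w).left.norm = normAway x w := by
  refine le_antisymm ?_ ?_
  · conv_lhs => rw [← mk_toWord (x := w)]
    exact norm_left_rewriting_mk_le x w.toWord
  · -- Substituting `xⁱ * a * x⁻ⁱ` for `(a, i)` recovers `w` up to a power of `x`, and each letter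
    -- contributes at most one letter other than `x`.
    set g : A × ℤ → FreeGroup A := fun q ↦ of x ^ q.2 * of q.1 * (of x ^ q.2)⁻¹
    have hg (q : A × ℤ) : normAway x (g q) ≤ 1 := by
      dsimp only [g]
      have := normAway_mul_le x (of x ^ q.2 * of q.1) ((of x ^ q.2)⁻¹)
      have := normAway_mul_le x (of x ^ q.2) (of q.1)
      have := normAway_of_le x q.1
      simp only [normAway_inv, normAway_of_zpow_self] at *
      omega
    have hw : w = lift g (rewriting x w).left * of x ^ (exponentSum x w).toAdd := by
      conv_lhs => rw [← lift_of_apply w, ← Function.update_eq_self x of]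
      exact lift_update_eq_lift_rewriting x of (of x) w
    calc normAway x w
        ≤ normAway x (lift g (rewriting x w).left) +
            normAway x (of x ^ (exponentSum x w).toAdd) := by
          conv_lhs => rw [hw]
          exact normAway_mul_le ..
      _ ≤ (rewriting x w).left.norm := by
          simpa using normAway_lift_le x hg _

variable {x} {w : FreeGroup A}

theorem isCyclicallyReduced_left_rewriting (hx : exponentSum x w = 1)
    (hw : IsCyclicallyReduced w.toWord) :
    IsCyclicallyReduced (rewriting x w).left.toWord := by
  have hsq : (rewriting x (w * w)).left = (rewriting x w).left * (rewriting x w).left := by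
    simp [right_rewriting, hx]
  apply isCyclicallyReduced_toWord_of_norm_sq
  rw [← hsq, norm_left_rewriting, norm_left_rewriting, normAway_sq_of_isCyclicallyReduced x hw]

theorem not_forall_height_eq_of_isCyclicallyReduced (hx : exponentSum x w = 1)
    (hw : IsCyclicallyReduced w.toWord) (hmem : ∃ b, (x, b) ∈ w.toWord) (c : ℤ) :
    ¬ ∀ q ∈ (rewriting x w).left.toWord, q.1.2 = c := by
  -- If all heights were `c`, then `w` would be conjugate by `x ^ c` to the shorter word `v`, and
  -- large powers of `w` would be longer than the conjugates of the powers of `v`.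
  intro hc
  set v := FreeGroup.map Prod.fst (rewriting x w).left
  have hv : v.norm < w.norm :=
    (norm_map_le _ _).trans_lt (norm_left_rewriting x w ▸ normAway_lt_norm x hmem)
  have hconj : w = of x ^ c * v * (of x ^ c)⁻¹ := by
    calc w = lift (fun q ↦ of x ^ q.2 * of q.1 * (of x ^ q.2)⁻¹) (rewriting x w).left := by
          simpa [hx, lift_of_apply] using lift_update_eq_lift_rewriting x of (of x) w
      _ = lift (fun q ↦ MulAut.conj (of x ^ c) (of q.1)) (rewriting x w).left :=
          lift_congr_of_forall_mem_toWord fun q hq ↦ by simp [hc q hq, -map_zpow]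
      _ = MulAut.conj (of x ^ c) v :=
          (lift_unique ((MulAut.conj (of x ^ c)).toMonoidHom.comp (FreeGroup.map Prod.fst))
            fun _ ↦ by simp).symm
  have hpow (n : ℕ) : n * w.norm ≤ n * v.norm + 2 * c.natAbs := by
    calc n * w.norm = (of x ^ c * v ^ n * (of x ^ c)⁻¹).norm := by
          rw [← norm_pow_of_isCyclicallyReduced hw, ← conj_pow, ← hconj]
      _ ≤ (of x ^ c).norm + (v ^ n).norm + (of x ^ c)⁻¹.norm := by
          grw [FreeGroup.norm_mul_le, FreeGroup.norm_mul_le]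
      _ ≤ _ := by
          grw [norm_pow_le, FreeGroup.norm_inv_eq, norm_of_zpow]
          omega
  have := hpow (2 * c.natAbs + 1)
  have := Nat.mul_le_mul_left (2 * c.natAbs + 1) (Nat.succ_le_of_lt hv)
  lia

theorem exists_height_lt_of_isCyclicallyReduced (hx : exponentSum x w = 1)
    (hw : IsCyclicallyReduced w.toWord) (hmem : ∃ b, (x, b) ∈ w.toWord) :
    ∃ c₁ ∈ (rewriting x w).left.toWord, ∃ c₂ ∈ (rewriting x w).left.toWord, c₁.1.2 < c₂.1.2 ∧
      ∀ c ∈ (rewriting x w).left.toWord, c₁.1.2 ≤ c.1.2 ∧ c.1.2 ≤ c₂.1.2 := by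
  have hne := not_forall_height_eq_of_isCyclicallyReduced hx hw hmem
  have hnil : (rewriting x w).left.toWord.toFinset.Nonempty :=
    List.toFinset_nonempty_iff _ |>.2 fun h ↦ hne 0 (by simp [h])
  obtain ⟨c₁, h₁, hmin⟩ := Finset.exists_min_image _ (·.1.2) hnil
  obtain ⟨c₂, h₂, hmax⟩ := Finset.exists_max_image _ (·.1.2) hnil
  simp only [List.mem_toFinset] at h₁ h₂ hmin hmax
  refine ⟨c₁, h₁, c₂, h₂, ?_, fun c hc ↦ ⟨hmin c hc, hmax c hc⟩⟩
  by_contra! hle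
  exact hne c₁.1.2 fun c hc ↦ le_antisymm ((hmax c hc).trans hle) (hmin c hc)

end Rewriting

section MagnusSubgroup

/-- The generators other than `x` freely generate a subgroup of `⟨A ∣ w = 1⟩`, called a Magnus
subgroup. -/
def FreeAwayFrom {A : Type*} (w : FreeGroup A) (x : A) : Prop :=
  Function.Injective
    ((PresentedGroup.mk {w}).comp (FreeGroup.map (Subtype.val : {a // a ≠ x} → A)))

theorem apply_eq_one_of_mk_eq_one {A G : Type*} [Group G] {w : FreeGroup A} {F : FreeGroup A →* G}
    (hF : F w = 1) {v : FreeGroup A} (hv : PresentedGroup.mk {w} v = 1) : F v = 1 :=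
  Subgroup.normalClosure_le_normal (N := F.ker) (by simpa using hF)
    (PresentedGroup.mk_eq_one_iff.1 hv)

theorem FreeAwayFrom.of_comp_injective {A G : Type*} [Group G] {w : FreeGroup A} {x : A}
    (F : FreeGroup A →* G) (hF : F w = 1)
    (hinj : Function.Injective (F.comp (FreeGroup.map (Subtype.val : {a // a ≠ x} → A)))) :
    FreeAwayFrom w x := by
  refine (injective_iff_map_eq_one _).2 fun u hu ↦ ?_
  exact (injective_iff_map_eq_one _).1 hinj u (apply_eq_one_of_mk_eq_one hF hu)

theorem FreeAwayFrom.injective_comp_map {A T : Type*} {w : FreeGroup A} {x : A}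
    (h : FreeAwayFrom w x) {j : T → A} (hj : Function.Injective j) (hx : ∀ t, j t ≠ x) :
    Function.Injective ((PresentedGroup.mk {w}).comp (FreeGroup.map j)) := by
  have hj' : Function.Injective fun t ↦ (⟨j t, hx t⟩ : {a // a ≠ x}) :=
    fun _ _ hst ↦ hj (congrArg Subtype.val hst)
  have hcomp : (PresentedGroup.mk {w}).comp (FreeGroup.map j) =
      ((PresentedGroup.mk {w}).comp (FreeGroup.map (Subtype.val : {a // a ≠ x} → A))).comp
        (FreeGroup.map fun t ↦ ⟨j t, hx t⟩) := by
    ext t; simp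
  rw [hcomp]
  exact h.comp (map_injective hj')

end MagnusSubgroup

section ZeroExponent

theorem exists_conj_eq_of_injective {G : Type u} {H : Type*} [Group G] [Group H] {f g : H →* G}
    (hf : Function.Injective f) (hg : Function.Injective g) :
    ∃ (K : Type u) (_ : Group K) (ι : G →* K) (t : K), Function.Injective ι ∧
      ∀ h, t * ι (f h) * t⁻¹ = ι (g h) := by
  let φ := (MonoidHom.ofInjective hf).symm.trans (MonoidHom.ofInjective hg)
  refine ⟨HNNExtension G f.range g.range φ, inferInstance, HNNExtension.of, HNNExtension.t,
    HNNExtension.of_injective _, fun h ↦ ?_⟩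
  have hφ : φ (MonoidHom.ofInjective hf h) = MonoidHom.ofInjective hg h := by simp [φ]
  have := HNNExtension.t_mul_of (φ := φ) (MonoidHom.ofInjective hf h)
  rw [hφ] at this
  exact mul_inv_eq_of_eq_mul this

theorem conj_zpow_eq_of_forall_conj_eq {K : Type*} [Group K] {t : K} {g : ℤ → K} {m M : ℤ}
    (h : ∀ i, m ≤ i → i < M → t * g i * t⁻¹ = g (i + 1)) {i : ℤ} (hm : m ≤ i) (hM : i ≤ M) :
    t ^ i * g m * (t ^ i)⁻¹ = t ^ m * g i * (t ^ m)⁻¹ := by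
  induction i, hm using Int.leInduction with
  | base => rfl
  | succ i hm ih =>
    calc t ^ (i + 1) * g m * (t ^ (i + 1))⁻¹
        = t * (t ^ i * g m * (t ^ i)⁻¹) * t⁻¹ := by group
      _ = t ^ m * (t * g i * t⁻¹) * (t ^ m)⁻¹ := by rw [ih (by lia)]; group
      _ = t ^ m * g (i + 1) * (t ^ m)⁻¹ := by rw [h i hm (by lia)]

theorem exists_conj_zpow_eq {A : Type u} {r : FreeGroup (A × ℤ)} {y₁ y₂ : A × ℤ}
    (h₁ : FreeAwayFrom r y₁) (h₂ : FreeAwayFrom r y₂) :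
    ∃ (K : Type u) (_ : Group K) (ι : PresentedGroup {r} →* K) (t : K), Function.Injective ι ∧
      ∀ a i, y₁.2 ≤ i → i ≤ y₂.2 →
        t ^ i * ι (.of (a, y₁.2)) * (t ^ i)⁻¹ = t ^ y₁.2 * ι (.of (a, i)) * (t ^ y₁.2)⁻¹ := by
  let bot : {q : A × ℤ // y₁.2 ≤ q.2 ∧ q.2 < y₂.2} → A × ℤ := Subtype.val
  let top : {q : A × ℤ // y₁.2 ≤ q.2 ∧ q.2 < y₂.2} → A × ℤ := fun q ↦ (q.1.1, q.1.2 + 1)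
  have hbot : Function.Injective ((PresentedGroup.mk {r}).comp (FreeGroup.map bot)) :=
    h₂.injective_comp_map Subtype.val_injective fun q ↦ by grind
  have htop : Function.Injective ((PresentedGroup.mk {r}).comp (FreeGroup.map top)) :=
    h₁.injective_comp_map (fun q q' h ↦ by grind) fun q ↦ by grind
  obtain ⟨K, _, ι, t, hι, ht⟩ := exists_conj_eq_of_injective hbot htop
  refine ⟨K, _, ι, t, hι, fun a i hm hM ↦ ?_⟩
  refine conj_zpow_eq_of_forall_conj_eq (g := fun i ↦ ι (.of (a, i))) (fun j hm hM ↦ ?_) hm hM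
  simpa [bot, top, PresentedGroup.of] using ht (of ⟨(a, j), hm, hM⟩)

theorem freeAwayFrom_of_exponentSum_eq_one {A : Type u} [DecidableEq A] {w : FreeGroup A} {x : A}
    (hx : exponentSum x w = 1) {y₁ y₂ : A × ℤ} (hlt : y₁.2 < y₂.2)
    (hbound : ∀ c ∈ (rewriting x w).left.toWord, y₁.2 ≤ c.1.2 ∧ c.1.2 ≤ y₂.2)
    (h₁ : FreeAwayFrom (rewriting x w).left y₁) (h₂ : FreeAwayFrom (rewriting x w).left y₂) :
    FreeAwayFrom w x := by
  set r := (rewriting x w).left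
  obtain ⟨K, _, ι, t, hι, ht⟩ := exists_conj_zpow_eq h₁ h₂
  let f (a : A) : K := ι (.of (a, y₁.2))
  refine .of_comp_injective (lift (Function.update f x t)) ?_ ?_
  · calc lift (Function.update f x t) w
        = lift (fun q ↦ t ^ q.2 * f q.1 * (t ^ q.2)⁻¹) r := by
          simp [lift_update_eq_lift_rewriting, hx, r]
      _ = lift (fun q ↦ t ^ y₁.2 * ι (.of q) * (t ^ y₁.2)⁻¹) r :=
          lift_congr_of_forall_mem_toWord fun c hc ↦ ht _ _ (hbound c hc).1 (hbound c hc).2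
      _ = MulAut.conj (t ^ y₁.2) (ι (PresentedGroup.mk {r} r)) :=
          (lift_unique ((MulAut.conj (t ^ y₁.2)).toMonoidHom.comp
            (ι.comp (PresentedGroup.mk {r}))) fun _ ↦ rfl).symm
      _ = 1 := by rw [PresentedGroup.one_of_mem (Set.mem_singleton r), map_one, map_one]
  · have hcomp : (lift (Function.update f x t)).comp
        (FreeGroup.map (Subtype.val : {a // a ≠ x} → A)) =
          ι.comp ((PresentedGroup.mk {r}).comp (FreeGroup.map fun a ↦ (a.1, y₁.2))) := by
      ext a
      simp [f, a.2, PresentedGroup.of]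
    rw [hcomp]
    refine hι.comp (h₂.injective_comp_map (fun a b hab ↦ ?_) fun a ha ↦ ?_)
    · exact Subtype.ext (congrArg Prod.fst hab)
    · grind

end ZeroExponent

section Equation

theorem zpow_surjective_of_isPGroup {G : Type*} [Group G] {p : ℕ} (hG : IsPGroup p G) {n : ℤ}
    (hn : p.Coprime n.natAbs) : Function.Surjective fun g : G ↦ g ^ n := by
  intro g
  cases n using Int.negInduction with
  | nat n => simpa using (hG.powEquiv hn).surjective g
  | neg _ n =>
    obtain ⟨h, hh⟩ := (hG.powEquiv (by simpa using hn)).surjective g⁻¹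
    exact ⟨h, by simpa [inv_eq_iff_eq_inv] using hh⟩

theorem lift_update_mul_of_mem_center {G : Type*} [Group G] (f : A → G) (x : A) (g : G) {z : G}
    (hz : z ∈ Subgroup.center G) (w : FreeGroup A) :
    lift (Function.update f x (g * z)) w =
      lift (Function.update f x g) w * z ^ (exponentSum x w).toAdd := by
  let e : FreeGroup A × Multiplicative ℤ →* G :=
    (lift (Function.update f x g)).noncommCoprod (zpowersHom G z) fun _ k ↦
      (Subgroup.mem_center_iff.1 (zpow_mem hz k.toAdd) _)
  have e_apply (v k) : e (v, k) = lift (Function.update f x g) v * z ^ k.toAdd := rfl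
  have he : lift (Function.update f x (g * z)) =
      e.comp ((MonoidHom.id _).prod (exponentSum x)) := by
    ext a
    obtain rfl | ha := eq_or_ne a x <;> simp [exponentSum, *]
  exact DFunLike.congr_fun he w

theorem exists_lift_update_eq_one {G : Type*} [Group G] [Group.IsNilpotent G] {p : ℕ}
    (hG : IsPGroup p G) {w : FreeGroup A} {x : A}
    (hp : p.Coprime (exponentSum x w).toAdd.natAbs) (f : A → G) :
    ∃ g, lift (Function.update f x g) w = 1 := by
  revert hG f
  refine Group.nilpotent_center_quotient_ind (P := fun G _ _ ↦ IsPGroup p G → ∀ f : A → G,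
    ∃ g, lift (Function.update f x g) w = 1) G ?_ ?_
  · exact fun _ _ _ _ _ ↦ ⟨1, Subsingleton.elim _ _⟩
  · intro G _ _ ih hG f
    let π := QuotientGroup.mk' (Subgroup.center G)
    obtain ⟨g', hg'⟩ := ih (hG.to_quotient _) (π ∘ f)
    obtain ⟨g, rfl⟩ := QuotientGroup.mk'_surjective _ g'
    have hc : lift (Function.update f x g) w ∈ Subgroup.center G := by
      rw [← QuotientGroup.eq_one_iff, ← hg', ← Function.comp_update]
      exact lift_unique (π.comp (lift (Function.update f x g))) (by simp)
    obtain ⟨⟨z, hz⟩, hzw⟩ :=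
      zpow_surjective_of_isPGroup (hG.to_subgroup _) hp ⟨_, inv_mem hc⟩
    refine ⟨g * z, ?_⟩
    have hz' : z ^ (exponentSum x w).toAdd = (lift (Function.update f x g) w)⁻¹ :=
      congrArg Subtype.val hzw
    rw [lift_update_mul_of_mem_center f x g hz, hz', mul_inv_cancel]

end Equation

section ResiduallyP

theorem isPGroup_ker_unitsMap {R S : Type*} [Ring R] [Ring S] {p : ℕ} [Fact p.Prime]
    [CharP R p] (φ : R →+* S) (hφ : ∀ r, φ r = 0 → IsNilpotent r) :
    IsPGroup p (Units.map (φ : R →* S)).ker := by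
  rintro ⟨u, hu⟩
  obtain ⟨k, hk⟩ := hφ (u - 1) (by simpa [sub_eq_zero, Units.ext_iff] using hu)
  refine ⟨k, Subtype.ext (Units.ext (sub_eq_zero.1 ?_))⟩
  have hpow : ((u : R) - 1) ^ p ^ k = 0 :=
    pow_eq_zero_of_le (Nat.lt_pow_self (Fact.out : p.Prime).one_lt).le hk
  simpa [sub_pow_char_pow_of_commute p k (Commute.one_right (u : R))] using hpow

/-- Restriction of an element of the incidence algebra to the diagonal. Its kernel is the ideal of
strictly triangular matrices. -/
def diagonal (𝕜 α : Type*) [Ring 𝕜] [PartialOrder α] [LocallyFiniteOrder α] [DecidableEq α] :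
    IncidenceAlgebra 𝕜 α →+* (α → 𝕜) where
  toFun f a := f a a
  map_one' := by ext; simp
  map_mul' f g := by ext; simp
  map_zero' := rfl
  map_add' _ _ := rfl

/-- The group of units of the incidence algebra with all diagonal entries equal to `1`.
For `α = Fin n` this is the group of upper unitriangular `n × n` matrices. -/
abbrev Unitriangular (𝕜 α : Type*) [Ring 𝕜] [PartialOrder α] [LocallyFiniteOrder α]
    [DecidableEq α] : Subgroup (IncidenceAlgebra 𝕜 α)ˣ :=
  (Units.map (diagonal 𝕜 α : IncidenceAlgebra 𝕜 α →* (α → 𝕜))).ker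

theorem isNilpotent_of_diagonal_eq_zero {𝕜 : Type*} [Ring 𝕜] {n : ℕ}
    {f : IncidenceAlgebra 𝕜 (Fin n)} (hf : diagonal 𝕜 (Fin n) f = 0) : IsNilpotent f := by
  have hpow (k : ℕ) (i j : Fin n) (hij : (j : ℕ) < i + k) : (f ^ k) i j = 0 := by
    induction k generalizing j with
    | zero => exact IncidenceAlgebra.apply_eq_zero_of_not_le (by lia) _
    | succ k ih =>
      rw [pow_succ, IncidenceAlgebra.mul_apply]
      refine Finset.sum_eq_zero fun l hl ↦ ?_
      obtain rfl | hlj := eq_or_ne l j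
      · rw [show f l l = 0 from congrFun hf l, mul_zero]
      · rw [ih l (by grind), zero_mul]
  exact ⟨n, by ext i j; exact hpow n i j (by lia)⟩

theorem isPGroup_unitriangular (𝕜 : Type*) [Field 𝕜] (p : ℕ) [Fact p.Prime] [CharP 𝕜 p] (n : ℕ) :
    IsPGroup p (Unitriangular 𝕜 (Fin (n + 1))) := by
  have : Nontrivial (IncidenceAlgebra 𝕜 (Fin (n + 1))) := (diagonal 𝕜 _).domain_nontrivial
  have : CharP (IncidenceAlgebra 𝕜 (Fin (n + 1))) p :=
    charP_of_injective_algebraMap (algebraMap 𝕜 _).injective p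
  exact isPGroup_ker_unitsMap _ fun _ ↦ isNilpotent_of_diagonal_eq_zero

variable {C : Type*} [DecidableEq C] {n : ℕ} (𝕜 : Type*) [Ring 𝕜] (ℓ : Fin n → C)

/-- Label the edge `k → k + 1` of the path `0 → 1 → ⋯ → n` by `ℓ k`; this is the adjacency matrix
of the edges labelled `c`, as an element of the incidence algebra. -/
def pathEdge (c : C) : IncidenceAlgebra 𝕜 (Fin (n + 1)) where
  toFun i j := if ∃ k, k.castSucc = i ∧ k.succ = j ∧ ℓ k = c then 1 else 0
  eq_zero_of_not_le' _ _ hij := if_neg fun ⟨k, hi, hj, _⟩ ↦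
    hij (hi ▸ hj ▸ Fin.castSucc_le_succ k)

theorem diagonal_pathEdge (c : C) : diagonal 𝕜 (Fin (n + 1)) (pathEdge 𝕜 ℓ c) = 0 := by
  ext i
  refine if_neg fun ⟨k, hi, hj, _⟩ ↦ ?_
  grind

/-- The unit `1 + pathEdge 𝕜 ℓ c` of the incidence algebra. -/
noncomputable def pathUnit (c : C) : Unitriangular 𝕜 (Fin (n + 1)) where
  val := (isNilpotent_of_diagonal_eq_zero (diagonal_pathEdge 𝕜 ℓ c)).isUnit_one_add.unit
  property := by simp [Units.ext_iff, diagonal_pathEdge]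

variable {𝕜 ℓ}

theorem coe_pathUnit (c : C) : (pathUnit 𝕜 ℓ c).1.1 = 1 + pathEdge 𝕜 ℓ c :=
  rfl

theorem mul_pathUnit_apply_zero (f : Unitriangular 𝕜 (Fin (n + 1))) (c : C) (i : Fin (n + 1)) :
    (f * pathUnit 𝕜 ℓ c).1.1 i 0 = f.1.1 i 0 := by
  have hedge : (f.1.1 * pathEdge 𝕜 ℓ c) i 0 = 0 := by
    simp [pathEdge]
  simp only [Subgroup.coe_mul, Units.val_mul, coe_pathUnit, mul_add, mul_one,
    IncidenceAlgebra.add_apply, hedge, add_zero]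

theorem mul_pathUnit_apply_succ (f : Unitriangular 𝕜 (Fin (n + 1))) (c : C)
    (i : Fin (n + 1)) (k : Fin n) :
    (f * pathUnit 𝕜 ℓ c).1.1 i k.succ =
      f.1.1 i k.succ + if ℓ k = c then f.1.1 i k.castSucc else 0 := by
  have hedge : (f.1.1 * pathEdge 𝕜 ℓ c) i k.succ = if ℓ k = c then f.1.1 i k.castSucc else 0 := by
    rw [IncidenceAlgebra.mul_apply, Finset.sum_eq_single k.castSucc]
    · simp [pathEdge]
    · intro j _ hj
      simp [pathEdge, hj.symm]
    · intro hk
      rw [IncidenceAlgebra.apply_eq_zero_of_not_le (by grind), zero_mul]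
  simp only [Subgroup.coe_mul, Units.val_mul, coe_pathUnit, mul_add, mul_one,
    IncidenceAlgebra.add_apply, hedge]

/-- The last nonzero entry of the first row of `f` is a `1` in position `k`. -/
def IsLeading (f : Unitriangular 𝕜 (Fin (n + 1))) (k : Fin (n + 1)) : Prop :=
  f.1.1 0 k = 1 ∧ ∀ j, k < j → f.1.1 0 j = 0

theorem IsLeading.mul_pathUnit {f : Unitriangular 𝕜 (Fin (n + 1))} {k : Fin n}
    (hf : IsLeading f k.castSucc) : IsLeading (f * pathUnit 𝕜 ℓ (ℓ k)) k.succ := by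
  refine ⟨?_, fun j hj ↦ ?_⟩
  · rw [mul_pathUnit_apply_succ, hf.1, hf.2 _ (by grind)]
    simp
  · obtain ⟨i, rfl⟩ := Fin.exists_succ_eq_of_ne_zero (Fin.ne_zero_of_lt hj)
    rw [mul_pathUnit_apply_succ, hf.2 _ (by grind), hf.2 _ (by grind)]
    simp

theorem IsLeading.mul_pathUnit_inv {f : Unitriangular 𝕜 (Fin (n + 1))} {k : Fin (n + 1)} {c : C}
    (hf : IsLeading f k) (hpred : ∀ i, i.succ = k → ℓ i ≠ c)
    (hsucc : ∀ i, i.castSucc = k → ℓ i ≠ c) : IsLeading (f * (pathUnit 𝕜 ℓ c)⁻¹) k := by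
  obtain ⟨g, rfl⟩ : ∃ g, g * pathUnit 𝕜 ℓ c = f := ⟨_, inv_mul_cancel_right f _⟩
  rw [mul_inv_cancel_right]
  refine ⟨?_, fun j ↦ ?_⟩
  · rw [← hf.1]
    cases k using Fin.cases with
    | zero => rw [mul_pathUnit_apply_zero]
    | succ i => rw [mul_pathUnit_apply_succ, if_neg (hpred i rfl), add_zero]
  · induction j using Fin.induction with
    | zero => intro hj; exact absurd hj (Fin.not_lt_zero _)
    | succ i ih =>
      intro hj
      have hi := hf.2 _ hj
      rw [mul_pathUnit_apply_succ] at hi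
      obtain hki | hki := (show k ≤ i.castSucc by grind).eq_or_lt
      · simpa [hsucc i hki.symm] using hi
      · simpa [ih hki] using hi

variable (𝕜) in
/-- The homomorphism sending the generator `a` to `(pathUnit (a, false))⁻¹ * pathUnit (a, true)`,
for a path labelled by letters: a letter `c` then moves the leading position along an edge
labelled `c`. -/
noncomputable def pathHom {T : Type*} [DecidableEq T] (ℓ : Fin n → T × Bool) :
    FreeGroup T →* Unitriangular 𝕜 (Fin (n + 1)) :=
  lift fun a ↦ (pathUnit 𝕜 ℓ (a, false))⁻¹ * pathUnit 𝕜 ℓ (a, true)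

theorem pathHom_mk_singleton {T : Type*} [DecidableEq T] (ℓ : Fin n → T × Bool) (c : T × Bool) :
    pathHom 𝕜 ℓ (mk [c]) = (pathUnit 𝕜 ℓ (c.1, !c.2))⁻¹ * pathUnit 𝕜 ℓ c := by
  obtain ⟨a, _ | _⟩ := c <;> simp [pathHom]

theorem isLeading_pathHom_mk {T : Type*} [DecidableEq T] {L : List (T × Bool)}
    (hL : FreeGroup.IsReduced L) (k : Fin (L.length + 1)) :
    IsLeading (pathHom 𝕜 L.get (mk (L.take k))) k := by
  induction k using Fin.induction with
  | zero =>
    rw [Fin.val_zero, List.take_zero, ← one_eq_mk, map_one]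
    exact ⟨by simp, fun j hj ↦ by simp [hj.ne]⟩
  | succ k ih =>
    have htake : mk (L.take k.succ) = mk (L.take k) * mk [L.get k] := by
      rw [mul_mk]; simp
    rw [htake, map_mul, pathHom_mk_singleton, ← mul_assoc]
    refine (ih.mul_pathUnit_inv (fun i hi h ↦ ?_) fun i hi h ↦ ?_).mul_pathUnit
    · have hcancel := List.isChain_iff_getElem.1 hL i (by grind)
      have hik : (i : ℕ) + 1 = k := by simpa [Fin.ext_iff] using hi
      simp_all
    · obtain rfl := Fin.castSucc_injective _ hi
      simp [Prod.ext_iff] at h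

theorem exists_isPGroup_hom_ne_one {T : Type*} (p : ℕ) [Fact p.Prime] {u : FreeGroup T}
    (hu : u ≠ 1) : ∃ (G : Type) (_ : Group G) (_ : Group.IsNilpotent G) (φ : FreeGroup T →* G),
      IsPGroup p G ∧ φ u ≠ 1 := by
  classical
  let G := Unitriangular (ZMod p) (Fin (u.toWord.length + 1))
  have hG : IsPGroup p G := isPGroup_unitriangular (ZMod p) p _
  have : Finite (IncidenceAlgebra (ZMod p) (Fin (u.toWord.length + 1))) := DFunLike.finite _
  refine ⟨G, inferInstance, hG.isNilpotent, pathHom (ZMod p) u.toWord.get, hG, fun h ↦ ?_⟩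
  have hlead := (isLeading_pathHom_mk (𝕜 := ZMod p) (isReduced_toWord (x := u)) (Fin.last _)).1
  rw [Fin.val_last, List.take_length, mk_toWord, h] at hlead
  have hlen : 0 ≠ Fin.last u.toWord.length := by simpa [Fin.ext_iff, eq_comm] using hu
  simp [hlen] at hlead

end ResiduallyP

theorem freeAwayFrom_of_exponentSum_ne_one {w : FreeGroup A} {x : A} (hx : exponentSum x w ≠ 1) :
    FreeAwayFrom w x := by
  refine (injective_iff_map_eq_one _).2 fun u hu ↦ by_contra fun hne ↦ ?_
  have hpos : 0 < (exponentSum x w).toAdd.natAbs := Int.natAbs_pos.2 hx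
  obtain ⟨p, hlt, hp⟩ := Nat.exists_infinite_primes ((exponentSum x w).toAdd.natAbs + 1)
  have := Fact.mk hp
  obtain ⟨G, _, _, φ, hG, hφ⟩ := exists_isPGroup_hom_ne_one p hne
  let f (a : A) : G := if ha : a ≠ x then φ (of ⟨a, ha⟩) else 1
  have hcop : p.Coprime (exponentSum x w).toAdd.natAbs :=
    Nat.coprime_of_lt_prime hpos.ne' hlt hp
  obtain ⟨g, hg⟩ := exists_lift_update_eq_one hG hcop f
  have hcomp : (lift (Function.update f x g)).comp (FreeGroup.map Subtype.val) = φ := by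
    ext a
    simp [f, a.2]
  exact hφ (hcomp ▸ apply_eq_one_of_mk_eq_one hg hu)

theorem freeAwayFrom_of_isCyclicallyReduced {A : Type u} [DecidableEq A] {w : FreeGroup A}
    (hw : IsCyclicallyReduced w.toWord) {x : A} (hmem : ∃ b, (x, b) ∈ w.toWord) :
    FreeAwayFrom w x := by
  by_cases hx : exponentSum x w = 1
  · obtain ⟨c₁, h₁, c₂, h₂, hlt, hbound⟩ := exists_height_lt_of_isCyclicallyReduced hx hw hmem
    have hr := isCyclicallyReduced_left_rewriting hx hw
    exact freeAwayFrom_of_exponentSum_eq_one hx hlt hbound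
      (freeAwayFrom_of_isCyclicallyReduced hr ⟨c₁.2, h₁⟩)
      (freeAwayFrom_of_isCyclicallyReduced hr ⟨c₂.2, h₂⟩)
  · exact freeAwayFrom_of_exponentSum_ne_one hx
termination_by w.norm
decreasing_by all_goals exact norm_left_rewriting x w ▸ normAway_lt_norm x hmem

end Magnus

/-- **The Freiheitssatz (Magnus, 1930).** If some letter occurring in the
cyclically reduced relator `w` lies outside `B ⊆ A`, then the generators in `B`
freely generate a free subgroup of the one-relator group `⟨A ∣ w = 1⟩`. -/
theorem freiheitssatz {A : Type*} [DecidableEq A]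
    (w : FreeGroup A) (hw : w ≠ 1) (hcyc : FreeGroup.CyclicallyReduced w)
    (B : Set A)
    (hB : ∃ a : A, (∃ b : Bool, (a, b) ∈ w.toWord) ∧ a ∉ B) :
    Function.Injective
      ((QuotientGroup.mk' (Subgroup.normalClosure ({w} : Set (FreeGroup A)))).comp
        (FreeGroup.map (Subtype.val : B → A))) := by
  obtain ⟨x, hmem, hxB⟩ := hB
  have hfree : Magnus.FreeAwayFrom w x := Magnus.freeAwayFrom_of_isCyclicallyReduced
    (Magnus.isCyclicallyReduced_of_cyclicallyReduced hcyc) hmem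
  exact hfree.injective_comp_map
    Subtype.val_injective fun b hb ↦ hxB (hb ▸ b.2)
end
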